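/- arXiv:1209.3577 — 8 statements merged into one kernel-verified Lean document; each statement's English description precedes it below -/
import Mathlib

section
/- For every real number x ≥ 1, the partial sum m(x) = ∑_{n ≤ x} μ(n)/n satisfies −1 ≤ m(x) ≤ 1. -/
/-!
Summing `μ * ζ = 1` over `n ≤ x` gives `∑ μ(n) ⌊x/n⌋ = 1`, that is,
`x ∑ μ(n)/n = 1 + ∑ μ(n) {x/n}`. Each of the `⌊x⌋` fractional parts is less than `1`, and the one
at `n = 1` is `x - ⌊x⌋`, so they add up to at most `x - 1`. Hence `|x ∑ μ(n)/n - 1| ≤ x - 1`,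
and so `-x < 2 - x ≤ x ∑ μ(n)/n ≤ x`.
-/

open ArithmeticFunction Finset

section FractionalParts

variable {K : Type*} [Field K] [LinearOrder K] [IsStrictOrderedRing K] [FloorRing K] {x : K}

lemma sum_fract_div_natCast_le (hx : 1 ≤ x) :
    ∑ n ∈ Icc 1 ⌊x⌋₊, Int.fract (x / n) ≤ x - 1 := by
  have one_mem : 1 ∈ Icc 1 ⌊x⌋₊ := mem_Icc.2 ⟨le_rfl, (Nat.one_le_floor_iff x).2 hx⟩
  have fract_eq : Int.fract x = x - ⌊x⌋₊ := by
    rw [natCast_floor_eq_intCast_floor (zero_le_one.trans hx), Int.self_sub_floor]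
  have complement : 1 - Int.fract x ≤ ⌊x⌋₊ - ∑ n ∈ Icc 1 ⌊x⌋₊, Int.fract (x / n) :=
    calc 1 - Int.fract x = 1 - Int.fract (x / (1 : ℕ)) := by rw [Nat.cast_one, div_one]
      _ ≤ ∑ n ∈ Icc 1 ⌊x⌋₊, (1 - Int.fract (x / n)) :=
        single_le_sum (f := fun n : ℕ ↦ 1 - Int.fract (x / n))
          (fun _ _ ↦ sub_nonneg.2 (Int.fract_lt_one _).le) one_mem
      _ = ⌊x⌋₊ - ∑ n ∈ Icc 1 ⌊x⌋₊, Int.fract (x / n) := by simp [sum_sub_distrib]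
  linarith

lemma sum_mul_zeta_eq_sum_mul_floor_div (f : ArithmeticFunction K) (hx : 0 ≤ x) :
    ∑ n ∈ Icc 1 ⌊x⌋₊, (f * zeta) n = ∑ n ∈ Icc 1 ⌊x⌋₊, f n * ⌊x / n⌋ := by
  calc ∑ n ∈ Icc 1 ⌊x⌋₊, (f * zeta) n = ∑ n ∈ Icc 1 ⌊x⌋₊, f n * ↑(⌊x⌋₊ / n) := by
        simpa only [← Icc_add_one_left_eq_Ioc, zero_add] using sum_Ioc_mul_zeta_eq_sum f ⌊x⌋₊
    _ = ∑ n ∈ Icc 1 ⌊x⌋₊, f n * ⌊x / n⌋ := by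
        refine sum_congr rfl fun n _ ↦ ?_
        rw [← Nat.floor_div_natCast, natCast_floor_eq_intCast_floor (by positivity)]

lemma mul_sum_div_sub_sum_mul_zeta (f : ArithmeticFunction K) (hx : 0 ≤ x) :
    x * ∑ n ∈ Icc 1 ⌊x⌋₊, f n / n - ∑ n ∈ Icc 1 ⌊x⌋₊, (f * zeta) n =
      ∑ n ∈ Icc 1 ⌊x⌋₊, f n * Int.fract (x / n) := by
  rw [sum_mul_zeta_eq_sum_mul_floor_div f hx, mul_sum, ← sum_sub_distrib]
  refine sum_congr rfl fun n _ ↦ ?_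
  rw [← Int.self_sub_floor]
  ring

lemma abs_mul_sum_div_sub_sum_mul_zeta_le {f : ArithmeticFunction K} {C : K}
    (hf : ∀ n, |f n| ≤ C) (hx : 1 ≤ x) :
    |x * ∑ n ∈ Icc 1 ⌊x⌋₊, f n / n - ∑ n ∈ Icc 1 ⌊x⌋₊, (f * zeta) n| ≤ C * (x - 1) := by
  have hC : 0 ≤ C := (abs_nonneg (f 0)).trans (hf 0)
  calc
    _ = |∑ n ∈ Icc 1 ⌊x⌋₊, f n * Int.fract (x / n)| := by
      rw [mul_sum_div_sub_sum_mul_zeta f (zero_le_one.trans hx)]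
    _ ≤ ∑ n ∈ Icc 1 ⌊x⌋₊, |f n * Int.fract (x / n)| := abs_sum_le_sum_abs _ _
    _ ≤ ∑ n ∈ Icc 1 ⌊x⌋₊, C * Int.fract (x / n) := by
      gcongr with n
      rw [abs_mul, Int.abs_fract]
      exact mul_le_mul_of_nonneg_right (hf n) (Int.fract_nonneg _)
    _ = C * ∑ n ∈ Icc 1 ⌊x⌋₊, Int.fract (x / n) := (mul_sum ..).symm
    _ ≤ C * (x - 1) := by gcongr; exact sum_fract_div_natCast_le hx

end FractionalParts

lemma sum_Icc_arithmeticFunction_one {R : Type*} [AddCommMonoidWithOne R] {N : ℕ}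
    (hN : 1 ≤ N) : ∑ n ∈ Icc 1 N, (1 : ArithmeticFunction R) n = 1 := by
  simp [one_apply, hN]

lemma abs_mul_sum_moebius_div_sub_one_le {x : ℝ} (hx : 1 ≤ x) :
    |x * ∑ n ∈ Icc 1 ⌊x⌋₊, (moebius n : ℝ) / n - 1| ≤ x - 1 := by
  have moebius_bound (n : ℕ) : |(moebius : ArithmeticFunction ℝ) n| ≤ 1 := by
    rw [intCoe_apply]
    exact_mod_cast abs_moebius_le_one
  simpa only [coe_moebius_mul_coe_zeta, intCoe_apply, one_mul,
    sum_Icc_arithmeticFunction_one ((Nat.one_le_floor_iff x).2 hx)]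
    using abs_mul_sum_div_sub_sum_mul_zeta_le moebius_bound hx

/-- **Gram's inequality** (1884): for every real `x ≥ 1`,
`-1 ≤ ∑_{n ≤ x} μ(n)/n ≤ 1`. -/
theorem gram_inequality (x : ℝ) (hx : 1 ≤ x) :
    -1 ≤ ∑ n ∈ Finset.Icc 1 ⌊x⌋₊, (ArithmeticFunction.moebius n : ℝ) / n ∧
    ∑ n ∈ Finset.Icc 1 ⌊x⌋₊, (ArithmeticFunction.moebius n : ℝ) / n ≤ 1 := by
  have x_pos : 0 < x := zero_lt_one.trans_le hx
  obtain ⟨lower, upper⟩ := abs_le.1 (abs_mul_sum_moebius_div_sub_one_le hx)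
  constructor <;> refine le_of_mul_le_mul_left ?_ x_pos <;> linarith
end

section
/- For every positive integer k and every real number x ≥ 1, one has ∑_{n ≤ x} μ(n) φ_k(x/n) = k (1 − 1/x)^{k−1}, where the sum is over positive integers n ≤ x. -/
/-- The `k`-th Bernoulli polynomial, evaluated at a real number. -/
noncomputable def bernPoly (k : ℕ) (x : ℝ) : ℝ :=
  Polynomial.aeval x (Polynomial.bernoulli k)

/-- `B_k(x) = b_k({x})`, the periodized Bernoulli polynomial. -/
noncomputable def bernPer (k : ℕ) (x : ℝ) : ℝ := bernPoly k (Int.fract x)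

/-- `φ_k(x) = (b_k(x) - B_k(x)) / x^(k-1)`. -/
noncomputable def phiFun (k : ℕ) (x : ℝ) : ℝ := (bernPoly k x - bernPer k x) / x ^ (k - 1)

/-!
The difference equation `b_k(1 + t) = b_k(t) + k t^(k-1)` telescopes from `{y}` up to `y` and gives
`φ_k(y) = ∑_{m ≤ y} f(y/m)` with `f(t) = k (1 - 1/t)^(k-1)`. Möbius inversion for such sums, which
regroups the pairs `(n, m)` with `n m ≤ x` by their product and uses that `∑_{d ∣ l} μ(d)` vanishes
unless `l = 1`, recovers `f(x) = ∑_{n ≤ x} μ(n) φ_k(x/n)`.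
-/

open Finset ArithmeticFunction
open scoped ArithmeticFunction.Moebius

theorem sum_Icc_sum_Icc_div_eq_sum_sum_divisorsAntidiagonal {M : Type*} [AddCommMonoid M]
    (f : ℕ × ℕ → M) (N : ℕ) :
    ∑ n ∈ Icc 1 N, ∑ m ∈ Icc 1 (N / n), f (n, m) =
      ∑ l ∈ Icc 1 N, ∑ p ∈ l.divisorsAntidiagonal, f p := by
  rw [sum_sigma', sum_sigma']
  refine sum_bij' (fun p _ ↦ ⟨p.1 * p.2, (p.1, p.2)⟩) (fun q _ ↦ ⟨q.2.1, q.2.2⟩)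
    ?_ ?_ (fun _ _ ↦ rfl) ?_ (fun _ _ ↦ rfl)
  · rintro ⟨n, m⟩ h
    simp only [mem_sigma, mem_Icc, Nat.mem_divisorsAntidiagonal, true_and] at h ⊢
    obtain ⟨⟨hn, -⟩, hm, hmN⟩ := h
    have hnm : 1 ≤ n * m := Nat.mul_pos hn hm
    have hle : n * m ≤ N := by rwa [mul_comm, ← Nat.le_div_iff_mul_le hn]
    exact ⟨⟨hnm, hle⟩, Nat.ne_of_gt hnm⟩
  · rintro ⟨_, n, m⟩ h
    simp only [mem_sigma, mem_Icc, Nat.mem_divisorsAntidiagonal] at h ⊢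
    obtain ⟨⟨hpos, hle⟩, rfl, -⟩ := h
    have hn : 1 ≤ n := Nat.pos_of_mul_pos_right hpos
    have hm : 1 ≤ m := Nat.pos_of_mul_pos_left hpos
    have hmN : m ≤ N / n := by rwa [Nat.le_div_iff_mul_le hn, mul_comm]
    exact ⟨⟨hn, (Nat.le_mul_of_pos_right n hm).trans hle⟩, hm, hmN⟩
  · rintro ⟨_, n, m⟩ h
    simp only [mem_sigma, Nat.mem_divisorsAntidiagonal] at h
    obtain ⟨-, rfl, -⟩ := h
    rfl

theorem sum_divisors_moebius (n : ℕ) : ∑ d ∈ n.divisors, μ d = if n = 1 then 1 else 0 := by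
  rw [← coe_mul_zeta_apply, moebius_mul_coe_zeta, one_apply]

theorem sum_moebius_smul_sum_mul {M : Type*} [AddCommGroup M] (f : ℕ → M) {N : ℕ} (hN : 1 ≤ N) :
    ∑ n ∈ Icc 1 N, μ n • ∑ m ∈ Icc 1 (N / n), f (n * m) = f 1 := by
  calc ∑ n ∈ Icc 1 N, μ n • ∑ m ∈ Icc 1 (N / n), f (n * m)
      = ∑ l ∈ Icc 1 N, ∑ p ∈ l.divisorsAntidiagonal, μ p.1 • f (p.1 * p.2) := by
        simp_rw [smul_sum]
        exact sum_Icc_sum_Icc_div_eq_sum_sum_divisorsAntidiagonal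
          (fun p ↦ μ p.1 • f (p.1 * p.2)) N
    _ = ∑ l ∈ Icc 1 N, (∑ d ∈ l.divisors, μ d) • f l := by
        refine sum_congr rfl fun l _ ↦ ?_
        rw [sum_smul, ← Nat.sum_divisorsAntidiagonal (fun d _ ↦ μ d • f l)]
        exact sum_congr rfl fun p hp ↦ by rw [(Nat.mem_divisorsAntidiagonal.1 hp).1]
    _ = f 1 := by simp [sum_divisors_moebius, ite_smul, hN]

theorem sum_moebius_smul_sum_div {K M : Type*} [Semifield K] [LinearOrder K]
    [IsStrictOrderedRing K] [FloorSemiring K] [AddCommGroup M] (f : K → M) {x : K} (hx : 1 ≤ x) :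
    ∑ n ∈ Icc 1 ⌊x⌋₊, μ n • ∑ m ∈ Icc 1 ⌊x / n⌋₊, f (x / n / m) = f x := by
  have h := sum_moebius_smul_sum_mul (fun l ↦ f (x / l)) ((Nat.one_le_floor_iff x).2 hx)
  simpa only [Nat.floor_div_natCast, Nat.cast_mul, div_div, Nat.cast_one, div_one] using h

theorem aeval_one_add_bernoulli {A : Type*} [CommRing A] [Algebra ℚ A] (k : ℕ) (t : A) :
    Polynomial.aeval (1 + t) (Polynomial.bernoulli k) =
      Polynomial.aeval t (Polynomial.bernoulli k) + k * t ^ (k - 1) := by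
  simpa [Polynomial.aeval_comp] using
    congrArg (Polynomial.aeval t) (Polynomial.bernoulli_comp_one_add_X k)

theorem aeval_bernoulli_sub_aeval_sub_natCast {A : Type*} [CommRing A] [Algebra ℚ A]
    (k : ℕ) (y : A) (N : ℕ) :
    Polynomial.aeval y (Polynomial.bernoulli k) -
        Polynomial.aeval (y - N) (Polynomial.bernoulli k) =
      ∑ m ∈ Icc 1 N, k * (y - m) ^ (k - 1) := by
  induction N with
  | zero => simp
  | succ N ih =>
    have difference_eq := aeval_one_add_bernoulli k (y - (N + 1 : ℕ))
    rw [show 1 + (y - (N + 1 : ℕ)) = y - N by push_cast; ring] at difference_eq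
    rw [sum_Icc_succ_top (by lia), ← ih, difference_eq]
    ring

theorem phiFun_eq_sum (k : ℕ) {y : ℝ} (hy : 0 < y) :
    phiFun k y = ∑ m ∈ Icc 1 ⌊y⌋₊, k * (1 - 1 / (y / m)) ^ (k - 1) := by
  have fract_eq : Int.fract y = y - ⌊y⌋₊ := by
    rw [natCast_floor_eq_intCast_floor hy.le, Int.self_sub_floor]
  rw [phiFun, bernPer, bernPoly, bernPoly, fract_eq, aeval_bernoulli_sub_aeval_sub_natCast, sum_div]
  refine sum_congr rfl fun m _ ↦ ?_
  rw [one_div_div, one_sub_div hy.ne', div_pow, mul_div_assoc]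

/-- **MacLeod's identity** (1994): for every positive integer `k` and real `x ≥ 1`,
`∑_{n ≤ x} μ(n) φ_k(x/n) = k (1 - 1/x)^(k-1)`. -/
theorem macleod_identity (k : ℕ) (hk : 1 ≤ k) (x : ℝ) (hx : 1 ≤ x) :
    ∑ n ∈ Finset.Icc 1 ⌊x⌋₊, (ArithmeticFunction.moebius n : ℝ) * phiFun k (x / n)
      = k * (1 - 1 / x) ^ (k - 1) := by
  rw [← sum_moebius_smul_sum_div (fun t : ℝ ↦ k * (1 - 1 / t) ^ (k - 1)) hx]
  refine sum_congr rfl fun n hn ↦ ?_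
  have hn_pos : (0 : ℝ) < n := Nat.cast_pos.2 (mem_Icc.1 hn).1
  rw [zsmul_eq_mul, phiFun_eq_sum k (by positivity)]
end

section
/- For every positive integer k and every real number x ≥ 1, one has ∑_{n ≤ x} k (1 − n/x)^{k−1} = φ_k(x), where the sum is over positive integers n ≤ x; equivalently, φ_k(x) = k x^{1−k} ∑_{n ≤ x} (x − n)^{k−1}. -/
/-! Going down from `x` in unit steps for as long as the argument stays nonnegative ends at `{x}`,
and the step from `y + 1` to `y` changes `b_k` by `k y^(k-1)`; these differences telescope to
`b_k(x) - B_k(x)`. -/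

section

open Polynomial (aeval)

theorem aeval_bernoulli_one_add {A : Type*} [Semiring A] [Algebra ℚ A] (k : ℕ) (a : A) :
    aeval (1 + a) (Polynomial.bernoulli k) =
      aeval a (Polynomial.bernoulli k) + k * a ^ (k - 1) := by
  simpa [Polynomial.aeval_comp] using
    congrArg (aeval a) (Polynomial.bernoulli_comp_one_add_X k)

theorem aeval_bernoulli_sub_aeval_bernoulli_sub_natCast {A : Type*} [Ring A] [Algebra ℚ A]
    (k N : ℕ) (a : A) :
    aeval a (Polynomial.bernoulli k) - aeval (a - N) (Polynomial.bernoulli k) =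
      k * ∑ n ∈ Finset.Icc 1 N, (a - n) ^ (k - 1) := by
  induction N with
  | zero => simp
  | succ N ih =>
    have shift : 1 + (a - (N + 1 : ℕ)) = a - N := by push_cast; abel
    have step : aeval (a - N) (Polynomial.bernoulli k) =
        aeval (a - (N + 1 : ℕ)) (Polynomial.bernoulli k) + k * (a - (N + 1 : ℕ)) ^ (k - 1) := by
      rw [← shift, aeval_bernoulli_one_add]
    rw [Finset.sum_Icc_succ_top (Nat.le_add_left 1 N), mul_add, ← ih, step]
    abel

end

theorem fract_eq_sub_natFloor {R : Type*} [Ring R] [LinearOrder R] [IsStrictOrderedRing R]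
    [FloorRing R] {x : R} (hx : 0 ≤ x) : Int.fract x = x - ⌊x⌋₊ := by
  rw [← Int.self_sub_floor, natCast_floor_eq_intCast_floor hx]

theorem bernPoly_sub_bernPer (k : ℕ) {x : ℝ} (hx : 0 ≤ x) :
    bernPoly k x - bernPer k x = k * ∑ n ∈ Finset.Icc 1 ⌊x⌋₊, (x - n) ^ (k - 1) := by
  rw [bernPer, fract_eq_sub_natFloor hx]
  exact aeval_bernoulli_sub_aeval_bernoulli_sub_natCast k ⌊x⌋₊ x

theorem sum_mul_one_sub_div_pow_eq_phiFun (k : ℕ) {x : ℝ} (hx : 0 < x) :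
    ∑ n ∈ Finset.Icc 1 ⌊x⌋₊, (k : ℝ) * (1 - n / x) ^ (k - 1) = phiFun k x := by
  rw [phiFun, bernPoly_sub_bernPer k hx.le, Finset.mul_sum, Finset.sum_div]
  refine Finset.sum_congr rfl fun n _ ↦ ?_
  rw [mul_div_assoc, ← div_pow, sub_div, div_self hx.ne']

theorem phiFun_eq_mul_zpow_mul_sum {k : ℕ} (hk : 1 ≤ k) {x : ℝ} (hx : 0 ≤ x) :
    phiFun k x = k * x ^ ((1 : ℤ) - k) * ∑ n ∈ Finset.Icc 1 ⌊x⌋₊, (x - n) ^ (k - 1) := by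
  have zpow_eq_inv_pow : x ^ ((1 : ℤ) - k) = (x ^ (k - 1))⁻¹ := by
    rw [← zpow_natCast, ← zpow_neg, Nat.cast_sub hk, Nat.cast_one, neg_sub]
  rw [phiFun, bernPoly_sub_bernPer k hx, zpow_eq_inv_pow, div_eq_mul_inv, mul_right_comm]

/-- For every positive integer `k` and real `x ≥ 1`,
`∑_{n ≤ x} k (1 - n/x)^(k-1) = φ_k(x)`; equivalently
`φ_k(x) = k x^(1-k) ∑_{n ≤ x} (x - n)^(k-1)`. -/
theorem phi_eq_sum (k : ℕ) (hk : 1 ≤ k) (x : ℝ) (hx : 1 ≤ x) :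
    (∑ n ∈ Finset.Icc 1 ⌊x⌋₊, (k : ℝ) * (1 - n / x) ^ (k - 1) = phiFun k x) ∧
    phiFun k x = k * x ^ ((1 : ℤ) - k) * ∑ n ∈ Finset.Icc 1 ⌊x⌋₊, (x - n) ^ (k - 1) := by
  have hx_pos : 0 < x := zero_lt_one.trans_le hx
  exact ⟨sum_mul_one_sub_div_pow_eq_phiFun k hx_pos, phiFun_eq_mul_zpow_mul_sum hk hx_pos.le⟩
end

section
/- For every positive integer k, one has ∫_1^∞ B_k(t) t^{−(k+1)} dt = 1 + ∑_{j=1}^{k} B_j/j − γ, where γ is the Euler–Mascheroni constant. -/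
/-!
Away from the integers `B_{k+1}' = (k + 1) B_k`, and for `k ≥ 1` the function `B_{k+1}` is
continuous, so integrating the derivative of `B_{k+1}(t) / t ^ (k + 1)` over `(1, ∞)` relates the
integrals of index `k` and `k + 1`: they differ by `B_{k+1} / (k + 1)`. The recursion starts at
`k = 1`, where `B_1(t) = {t} - 1/2`, with `∫_1^∞ {t} / t² dt = 1 - γ`; cut into unit
intervals, the latter integral is the series summed in `ZetaAsymptotics.term_tsum_one`.
-/

open Filter MeasureTheory Set Topology

theorem integral_Ioi_of_hasDerivAt_off_countable_of_tendsto {E : Type*} [NormedAddCommGroup E]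
    [NormedSpace ℝ E] [CompleteSpace E] {f f' : ℝ → E} {a : ℝ} {m : E} {s : Set ℝ}
    (hs : s.Countable) (hcont : ContinuousOn f (Ici a))
    (hderiv : ∀ x ∈ Ioi a \ s, HasDerivAt f (f' x) x) (hint : IntegrableOn f' (Ioi a))
    (hf : Tendsto f atTop (𝓝 m)) :
    ∫ x in Ioi a, f' x = m - f a := by
  refine tendsto_nhds_unique (intervalIntegral_tendsto_integral_Ioi a hint tendsto_id)
    ((hf.sub_const (f a)).congr' ?_)
  filter_upwards [Ici_mem_atTop a] with b (hab : a ≤ b)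
  refine (integral_eq_of_hasDerivAt_off_countable f f' hs ?_ ?_ ?_).symm
  · exact hcont.mono (uIcc_of_le hab ▸ Icc_subset_Ici_self)
  · rw [min_eq_left hab]
    exact fun x hx ↦ hderiv x ⟨hx.1.1, hx.2⟩
  · exact (intervalIntegrable_iff_integrableOn_Ioc_of_le hab).2 (hint.mono_set Ioc_subset_Ioi_self)

theorem eqOn_one_div_pow_rpow_neg (n : ℕ) :
    EqOn (fun t : ℝ ↦ 1 / t ^ n) (fun t ↦ t ^ (-n : ℝ)) (Ioi 0) := fun t ht ↦ by
  simp only [Real.rpow_neg (le_of_lt ht), Real.rpow_natCast, one_div]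

theorem integrableOn_Ioi_one_div_pow {a : ℝ} (ha : 0 < a) {n : ℕ} (hn : 1 < n) :
    IntegrableOn (fun t ↦ 1 / t ^ n) (Ioi a) :=
  (integrableOn_Ioi_rpow_of_lt (neg_lt_neg (mod_cast hn)) ha).congr_fun
    ((eqOn_one_div_pow_rpow_neg n).symm.mono (Ioi_subset_Ioi ha.le)) measurableSet_Ioi

theorem integral_Ioi_one_div_pow {a : ℝ} (ha : 0 < a) {n : ℕ} (hn : 1 < n) :
    ∫ t in Ioi a, 1 / t ^ n = 1 / ((n - 1) * a ^ (n - 1)) := by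
  rw [setIntegral_congr_fun measurableSet_Ioi
      ((eqOn_one_div_pow_rpow_neg n).mono (Ioi_subset_Ioi ha.le)),
    integral_Ioi_rpow_of_lt (neg_lt_neg (mod_cast hn)) ha]
  have hexp : -(n : ℝ) + 1 = -((n - 1 : ℕ) : ℝ) := by
    rw [Nat.cast_pred (by lia)]
    ring
  rw [hexp, Real.rpow_neg ha.le, Real.rpow_natCast, neg_div_neg_eq, ← Nat.cast_pred (by lia)]
  field_simp

theorem integrableOn_Ioi_div_pow_of_bounded {f : ℝ → ℝ} {a C : ℝ} (ha : 0 < a)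
    (hf : AEStronglyMeasurable f (volume.restrict (Ioi a)))
    (hC : ∀ᵐ t ∂volume.restrict (Ioi a), |f t| ≤ C) {n : ℕ} (hn : 1 < n) :
    IntegrableOn (fun t ↦ f t / t ^ n) (Ioi a) := by
  simp only [div_eq_mul_one_div (f _)]
  exact (integrableOn_Ioi_one_div_pow ha hn).bdd_mul hf hC

theorem hasDerivAt_fract {x : ℝ} (hx : x ∉ range ((↑) : ℤ → ℝ)) :
    HasDerivAt (Int.fract : ℝ → ℝ) 1 x := by
  have hfloor : Int.fract =ᶠ[𝓝 x] fun y ↦ y - ⌊x⌋ := by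
    have hlt : (⌊x⌋ : ℝ) < x := (Int.floor_le x).lt_of_ne fun h ↦ hx ⟨_, h⟩
    filter_upwards [Ioo_mem_nhds hlt (Int.lt_floor_add_one x)] with y hy
    rw [Int.fract, Int.floor_eq_iff.2 ⟨hy.1.le, hy.2⟩]
  exact ((hasDerivAt_id x).sub_const _).congr_of_eventuallyEq hfloor

theorem integrableOn_Ioi_fract_div_sq {a : ℝ} (ha : 0 < a) :
    IntegrableOn (fun t ↦ Int.fract t / t ^ 2) (Ioi a) :=
  integrableOn_Ioi_div_pow_of_bounded ha measurable_fract.aestronglyMeasurable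
    (.of_forall fun t ↦ (Int.abs_fract (a := t)).trans_le (Int.fract_lt_one t).le) one_lt_two

theorem intervalIntegral_fract_div_sq (n : ℕ) :
    ∫ t in (n : ℝ)..(n + 1), Int.fract t / t ^ 2 = ZetaAsymptotics.term n 1 := by
  have hn : (n : ℝ) ≤ n + 1 := by linarith
  rw [ZetaAsymptotics.term, intervalIntegral.integral_of_le hn, intervalIntegral.integral_of_le hn,
    integral_Ioc_eq_integral_Ioo, integral_Ioc_eq_integral_Ioo]
  refine setIntegral_congr_fun measurableSet_Ioo fun t ht ↦ ?_
  have hfloor : ⌊t⌋ = (n : ℤ) := Int.floor_eq_iff.2 ⟨mod_cast ht.1.le, mod_cast ht.2⟩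
  have hexp : (1 : ℝ) + 1 = (2 : ℕ) := by norm_num
  simp only [Int.fract, hfloor, hexp, Real.rpow_natCast, Int.cast_natCast]

theorem integral_Ioi_one_fract_div_sq :
    ∫ t in Ioi (1 : ℝ), Int.fract t / t ^ 2 = 1 - Real.eulerMascheroniConstant := by
  have hint := integrableOn_Ioi_fract_div_sq one_pos
  have hsum (N : ℕ) : ∑ n ∈ Finset.range N, ZetaAsymptotics.term (n + 1) 1
      = ∫ t in (1 : ℝ)..(N + 1 : ℕ), Int.fract t / t ^ 2 := by
    have hpiece (n : ℕ) : IntervalIntegrable (fun t : ℝ ↦ Int.fract t / t ^ 2) volume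
        (n + 1 : ℕ) (n + 1 + 1 : ℕ) := by
      rw [intervalIntegrable_iff_integrableOn_Ioc_of_le (by simp)]
      exact hint.mono_set (Ioc_subset_Ioi_self.trans (Ioi_subset_Ioi (by simp)))
    simpa [← intervalIntegral_fract_div_sq] using
      intervalIntegral.sum_integral_adjacent_intervals fun n (_ : n < N) ↦ hpiece n
  refine tendsto_nhds_unique (intervalIntegral_tendsto_integral_Ioi 1 hint
    (tendsto_natCast_atTop_atTop.comp (tendsto_add_atTop_nat 1))) ?_
  exact ZetaAsymptotics.term_tsum_one.tendsto_sum_nat.congr hsum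

theorem bernPer_eq_bernoulliFun_comp_fract (k : ℕ) :
    bernPer k = bernoulliFun k ∘ Int.fract := by
  ext x
  simp [bernPer, bernPoly, bernoulliFun, Polynomial.aeval_def, Polynomial.eval_map]

theorem bernPer_intCast (k : ℕ) (m : ℤ) : bernPer k m = bernoulli k := by
  simp [bernPer_eq_bernoulliFun_comp_fract, bernoulliFun_eval_zero]

theorem bernPer_one_apply (x : ℝ) : bernPer 1 x = Int.fract x - 1 / 2 := by
  simp [bernPer_eq_bernoulliFun_comp_fract]

theorem measurable_bernPer (k : ℕ) : Measurable (bernPer k) := by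
  rw [bernPer_eq_bernoulliFun_comp_fract]
  exact (continuous_bernoulliFun k).measurable.comp measurable_fract

theorem exists_forall_abs_bernPer_le (k : ℕ) : ∃ C, ∀ x, |bernPer k x| ≤ C := by
  obtain ⟨C, hC⟩ := (isCompact_Icc (a := (0 : ℝ)) (b := 1)).exists_bound_of_continuousOn
    (continuous_bernoulliFun k).continuousOn
  refine ⟨C, fun x ↦ ?_⟩
  rw [bernPer_eq_bernoulliFun_comp_fract]
  exact hC _ ⟨Int.fract_nonneg x, (Int.fract_lt_one x).le⟩

theorem continuous_bernPer {k : ℕ} (hk : k ≠ 1) : Continuous (bernPer k) := by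
  rw [bernPer_eq_bernoulliFun_comp_fract]
  exact (continuous_bernoulliFun k).continuousOn.comp_fract''
    (bernoulliFun_endpoints_eq_of_ne_one hk).symm

theorem hasDerivAt_bernPer (k : ℕ) {x : ℝ} (hx : x ∉ range ((↑) : ℤ → ℝ)) :
    HasDerivAt (bernPer k) (k * bernPer (k - 1) x) x := by
  simp only [bernPer_eq_bernoulliFun_comp_fract]
  simpa using (hasDerivAt_bernoulliFun k (Int.fract x)).comp x (hasDerivAt_fract hx)

theorem integrableOn_Ioi_bernPer_div_pow (k : ℕ) {a : ℝ} (ha : 0 < a) {n : ℕ} (hn : 1 < n) :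
    IntegrableOn (fun t ↦ bernPer k t / t ^ n) (Ioi a) := by
  obtain ⟨C, hC⟩ := exists_forall_abs_bernPer_le k
  exact integrableOn_Ioi_div_pow_of_bounded ha (measurable_bernPer k).aestronglyMeasurable
    (.of_forall hC) hn

theorem tendsto_bernPer_div_pow_atTop (k : ℕ) {n : ℕ} (hn : n ≠ 0) :
    Tendsto (fun t ↦ bernPer k t / t ^ n) atTop (𝓝 0) := by
  obtain ⟨C, hC⟩ := exists_forall_abs_bernPer_le k
  exact bdd_le_mul_tendsto_zero' C (.of_forall hC) (tendsto_pow_atTop hn).inv_tendsto_atTop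

theorem hasDerivAt_bernPer_succ_div_pow (k n : ℕ) {x : ℝ} (hx : x ∉ range ((↑) : ℤ → ℝ)) :
    HasDerivAt (fun t ↦ bernPer (k + 1) t / t ^ (n + 1))
      ((k + 1) * (bernPer k x / x ^ (n + 1)) - (n + 1) * (bernPer (k + 1) x / x ^ (n + 2))) x := by
  have hx0 : x ≠ 0 := fun h ↦ hx ⟨0, by simp [h]⟩
  refine ((hasDerivAt_bernPer (k + 1) hx).div (hasDerivAt_pow (n + 1) x)
    (pow_ne_zero _ hx0)).congr_deriv ?_
  simp only [Nat.add_sub_cancel]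
  push_cast
  field_simp
  ring

theorem integral_Ioi_bernPer_succ_div_pow {k n : ℕ} (hk : k ≠ 0) (hn : n ≠ 0) {a : ℝ}
    (ha : 0 < a) :
    (n + 1) * ∫ t in Ioi a, bernPer (k + 1) t / t ^ (n + 2)
      = (k + 1) * (∫ t in Ioi a, bernPer k t / t ^ (n + 1)) + bernPer (k + 1) a / a ^ (n + 1) := by
  have hint_k :=
    (integrableOn_Ioi_bernPer_div_pow k ha (n := n + 1) (by lia)).const_mul ((k : ℝ) + 1)
  have hint_succ :=
    (integrableOn_Ioi_bernPer_div_pow (k + 1) ha (n := n + 2) (by lia)).const_mul ((n : ℝ) + 1)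
  have hcont : ContinuousOn (fun t ↦ bernPer (k + 1) t / t ^ (n + 1)) (Ici a) :=
    (continuous_bernPer (by lia)).continuousOn.div (by fun_prop)
      fun t ht ↦ pow_ne_zero _ (ha.trans_le ht).ne'
  have hftc := integral_Ioi_of_hasDerivAt_off_countable_of_tendsto
    (countable_range ((↑) : ℤ → ℝ)) hcont (fun t ht ↦ hasDerivAt_bernPer_succ_div_pow k n ht.2)
    (hint_k.sub hint_succ) (tendsto_bernPer_div_pow_atTop (k + 1) n.succ_ne_zero)
  rw [integral_sub hint_k hint_succ, integral_const_mul, integral_const_mul] at hftc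
  linarith

theorem integral_Ioi_one_bernPer_one_div_sq :
    ∫ t in Ioi (1 : ℝ), bernPer 1 t / t ^ 2 = 1 / 2 - Real.eulerMascheroniConstant := by
  have hsplit (t : ℝ) : bernPer 1 t / t ^ 2 = Int.fract t / t ^ 2 - 1 / 2 * (1 / t ^ 2) := by
    rw [bernPer_one_apply]
    ring
  simp only [hsplit]
  rw [integral_sub (integrableOn_Ioi_fract_div_sq one_pos)
      ((integrableOn_Ioi_one_div_pow one_pos one_lt_two).const_mul _),
    integral_const_mul, integral_Ioi_one_fract_div_sq, integral_Ioi_one_div_pow one_pos one_lt_two]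
  norm_num
  ring

theorem integral_Ioi_one_bernPer_succ {k : ℕ} (hk : k ≠ 0) :
    ∫ t in Ioi (1 : ℝ), bernPer (k + 1) t / t ^ (k + 2)
      = (∫ t in Ioi (1 : ℝ), bernPer k t / t ^ (k + 1)) + bernoulli (k + 1) / (k + 1) := by
  have h := integral_Ioi_bernPer_succ_div_pow hk hk one_pos
  have hone : bernPer (k + 1) 1 = bernoulli (k + 1) := mod_cast bernPer_intCast (k + 1) 1
  rw [hone, one_pow, div_one] at h
  field_simp
  linarith

/-- For every positive integer `k`,
`∫_1^∞ B_k(t) t^{-(k+1)} dt = 1 + ∑_{j=1}^k B_j / j - γ`,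
where `γ` is the Euler–Mascheroni constant. -/
theorem integral_bernPer (k : ℕ) (hk : 1 ≤ k) :
    ∫ t in Set.Ioi (1 : ℝ), bernPer k t / t ^ (k + 1)
      = 1 + (∑ j ∈ Finset.Icc 1 k, (bernoulli j : ℝ) / j) - Real.eulerMascheroniConstant := by
  induction k, hk using Nat.le_induction with
  | base =>
    rw [integral_Ioi_one_bernPer_one_div_sq]
    norm_num [bernoulli_one]
  | succ k hk ih =>
    rw [integral_Ioi_one_bernPer_succ (by lia), ih, Finset.sum_Icc_succ_top (by lia)]
    push_cast
    ring
end

section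
/- For every real number x ≥ 1, one has |m₁(x)| ≤ (1/x) ∫_1^x |M(t)|/t dt + 2/x − 2/x². -/
/-- `M(x) = ∑_{n ≤ x} μ(n)`. -/
noncomputable def Mobius_M (x : ℝ) : ℝ :=
  ∑ n ∈ Finset.Icc 1 ⌊x⌋₊, (ArithmeticFunction.moebius n : ℝ)

/-- `m₁(x) = ∑_{n ≤ x} μ(n) (1/n - 1/x)`. -/
noncomputable def Mobius_m1 (x : ℝ) : ℝ :=
  ∑ n ∈ Finset.Icc 1 ⌊x⌋₊, (ArithmeticFunction.moebius n : ℝ) * (1 / n - 1 / x)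

/-!
Let `F` be the summatory function of `f`. Then `∑_{n ≤ x} f(n) (1/n - 1/x) = ∫_1^x F(t) / t² dt`,
which is `1/x²` times the integral of `F` against the kernel `(x/t)²`. Replacing this kernel by
`⌊x/t⌋ (⌊x/t⌋ + 1)` changes it by at most `x/t`, which costs at most `(1/x) ∫_1^x |F(t)|/t dt`.
The new kernel is `∑_{n ≤ x/t} 2n`, so the substitution `t = u/n` in the `n`-th term turns its
integral into `2 ∫_1^x ∑_{n ≤ u} F(u/n) du`. For `f = μ` this is `2 (x - 1)`, because
`∑_{n ≤ u} M(u/n) = 1`.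
-/

open MeasureTheory Finset

section FloorSums

variable {α E : Type*} {τ : α → ℝ} {N : ℕ}

theorem sum_Icc_floor_eq_sum_indicator [AddCommMonoid E] (f : ℕ → α → E) {a : α}
    (ha : ⌊τ a⌋₊ ≤ N) :
    ∑ n ∈ Icc 1 ⌊τ a⌋₊, f n a = ∑ n ∈ Icc 1 N, {b | (n : ℝ) ≤ τ b}.indicator (f n) a := by
  have hfilter : Icc 1 ⌊τ a⌋₊ = (Icc 1 N).filter fun n : ℕ => (n : ℝ) ≤ τ a := by
    ext n
    simp only [mem_filter, mem_Icc, and_assoc]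
    refine and_congr_right fun hn => ?_
    rw [← Nat.le_floor_iff' (by omega)]
    omega
  simp [hfilter, sum_filter, Set.indicator_apply]

variable [MeasurableSpace α] {ν : Measure α} [NormedAddCommGroup E] {f : ℕ → α → E}

theorem integrable_sum_Icc_floor (hτ : Measurable τ) (hN : ∀ᵐ a ∂ν, ⌊τ a⌋₊ ≤ N)
    (hf : ∀ n ∈ Icc 1 N, Integrable (f n) ν) :
    Integrable (fun a => ∑ n ∈ Icc 1 ⌊τ a⌋₊, f n a) ν :=
  (integrable_finsetSum _ fun n hn =>
    (hf n hn).indicator (measurableSet_le measurable_const hτ)).congr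
    (hN.mono fun _ ha => (sum_Icc_floor_eq_sum_indicator f ha).symm)

theorem integral_sum_Icc_floor [NormedSpace ℝ E] (hτ : Measurable τ)
    (hN : ∀ᵐ a ∂ν, ⌊τ a⌋₊ ≤ N) (hf : ∀ n ∈ Icc 1 N, Integrable (f n) ν) :
    ∫ a, ∑ n ∈ Icc 1 ⌊τ a⌋₊, f n a ∂ν =
      ∑ n ∈ Icc 1 N, ∫ a in {a | (n : ℝ) ≤ τ a}, f n a ∂ν := by
  have hmeas (n : ℕ) : MeasurableSet {a | (n : ℝ) ≤ τ a} := measurableSet_le measurable_const hτ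
  rw [integral_congr_ae (hN.mono fun _ ha => sum_Icc_floor_eq_sum_indicator f ha),
    integral_finsetSum _ fun n hn => (hf n hn).indicator (hmeas n)]
  exact sum_congr rfl fun n _ => integral_indicator (hmeas n)

end FloorSums

section IntervalIntegrals

variable {E : Type*} [NormedAddCommGroup E] [NormedSpace ℝ E] {f : ℕ → ℝ → E} {x : ℝ}

theorem intervalIntegral_sum_Icc_floor (hx : 1 ≤ x)
    (hf : ∀ n ∈ Icc 1 ⌊x⌋₊, IntegrableOn (f n) (Set.Icc 1 x)) :
    ∫ t in (1 : ℝ)..x, ∑ n ∈ Icc 1 ⌊t⌋₊, f n t =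
      ∑ n ∈ Icc 1 ⌊x⌋₊, ∫ t in (n : ℝ)..x, f n t := by
  rw [intervalIntegral.integral_of_le hx, ← integral_Icc_eq_integral_Ioc,
    integral_sum_Icc_floor (τ := fun t => t) measurable_id
      (ae_restrict_of_forall_mem measurableSet_Icc fun t ht => Nat.floor_mono ht.2) hf]
  refine sum_congr rfl fun n hn => ?_
  obtain ⟨hn1, hnx⟩ := mem_Icc.1 hn
  have hdomain : {t : ℝ | (n : ℝ) ≤ t} ∩ Set.Icc 1 x = Set.Icc (n : ℝ) x := by
    have : (1 : ℝ) ≤ n := mod_cast hn1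
    ext t
    simp only [Set.mem_inter_iff, Set.mem_ofPred_eq, Set.mem_Icc]
    grind
  rw [Measure.restrict_restrict (measurableSet_le measurable_const measurable_id'), hdomain,
    intervalIntegral.integral_of_le ((Nat.le_floor_iff' (by omega)).1 hnx),
    integral_Icc_eq_integral_Ioc]

theorem intervalIntegral_sum_Icc_floor_div (hx : 1 ≤ x)
    (hf : ∀ n ∈ Icc 1 ⌊x⌋₊, IntegrableOn (f n) (Set.Icc 1 x)) :
    ∫ t in (1 : ℝ)..x, ∑ n ∈ Icc 1 ⌊x / t⌋₊, f n t =
      ∑ n ∈ Icc 1 ⌊x⌋₊, ∫ t in (1 : ℝ)..(x / n), f n t := by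
  have hmeas : Measurable fun t : ℝ => x / t := by fun_prop
  rw [intervalIntegral.integral_of_le hx, ← integral_Icc_eq_integral_Ioc,
    integral_sum_Icc_floor hmeas
      (ae_restrict_of_forall_mem measurableSet_Icc fun t ht =>
        Nat.floor_mono (div_le_self (by linarith) ht.1)) hf]
  refine sum_congr rfl fun n hn => ?_
  obtain ⟨hn1, hnx⟩ := mem_Icc.1 hn
  have hn1' : (1 : ℝ) ≤ n := mod_cast hn1
  have hn0 : (0 : ℝ) < n := by linarith
  have hdomain : {t : ℝ | (n : ℝ) ≤ x / t} ∩ Set.Icc 1 x = Set.Icc 1 (x / n) := by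
    ext t
    simp only [Set.mem_inter_iff, Set.mem_ofPred_eq, Set.mem_Icc]
    have hdiv : x / n ≤ x := div_le_self (by linarith) hn1'
    have hswap (ht : 1 ≤ t) : (n : ℝ) ≤ x / t ↔ t ≤ x / n :=
      le_div_comm₀ hn0 (by linarith)
    grind
  have h1xn : 1 ≤ x / n := (one_le_div hn0).2 ((Nat.le_floor_iff' (by omega)).1 hnx)
  rw [Measure.restrict_restrict (measurableSet_le measurable_const hmeas), hdomain,
    intervalIntegral.integral_of_le h1xn, integral_Icc_eq_integral_Ioc]

end IntervalIntegrals

theorem continuousOn_one_div_pow_Icc (k : ℕ) {a : ℝ} (ha : 0 < a) (b : ℝ) :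
    ContinuousOn (fun t : ℝ => 1 / t ^ k) (Set.Icc a b) :=
  continuousOn_const.div (by fun_prop) fun _ ht => pow_ne_zero k (ha.trans_le ht.1).ne'

theorem integral_one_div_sq {a b : ℝ} (ha : 0 < a) (hab : a ≤ b) :
    ∫ t in a..b, 1 / t ^ 2 = 1 / a - 1 / b := by
  have hpow (t : ℝ) : 1 / t ^ 2 = t ^ (-2 : ℤ) := by rw [one_div, zpow_neg, zpow_ofNat]
  have h0 : (0 : ℝ) ∉ Set.uIcc a b := Set.notMem_uIcc_of_lt ha (ha.trans_le hab)
  simp_rw [hpow]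
  rw [integral_zpow (.inr ⟨by decide, h0⟩), show (-2 + 1 : ℤ) = -1 by rfl, zpow_neg_one,
    zpow_neg_one]
  push_cast
  ring

theorem sum_Icc_two_mul_cast (N : ℕ) : ∑ n ∈ Icc 1 N, (2 * n : ℝ) = N * (N + 1) := by
  induction N with
  | zero => simp
  | succ N ih =>
    rw [sum_Icc_succ_top (by omega), ih]
    push_cast
    ring

theorem abs_sq_sub_floor_mul_floor_add_one_le {y : ℝ} (hy : 0 ≤ y) :
    |y ^ 2 - ⌊y⌋₊ * (⌊y⌋₊ + 1)| ≤ y := by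
  have hle := Nat.floor_le hy
  have hlt := Nat.lt_floor_add_one y
  rw [abs_le]
  constructor <;> nlinarith

/-- The summatory function `x ↦ ∑_{n ≤ x} f n` of a sequence, of which `Mobius_M` is the case
`f = μ`; the term `f 0` is left out. -/
noncomputable def summatory {E : Type*} [AddCommMonoid E] (f : ℕ → E) (x : ℝ) : E :=
  ∑ n ∈ Icc 1 ⌊x⌋₊, f n

section Summatory

variable {E : Type*} [NormedAddCommGroup E] (f : ℕ → E)

theorem integrableOn_summatory_div {c : ℝ} (hc : 0 ≤ c) (a b : ℝ) :
    IntegrableOn (fun t => summatory f (t / c)) (Set.Icc a b) :=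
  integrable_sum_Icc_floor (N := ⌊b / c⌋₊) (by fun_prop)
    (ae_restrict_of_forall_mem measurableSet_Icc fun t ht =>
      Nat.floor_mono (div_le_div_of_nonneg_right ht.2 hc))
    fun _ _ => integrable_const _

theorem integrableOn_summatory (a b : ℝ) : IntegrableOn (summatory f) (Set.Icc a b) := by
  simpa using integrableOn_summatory_div f zero_le_one a b

variable [NormedSpace ℝ E] {x : ℝ}

theorem integral_one_div_sq_smul_summatory [CompleteSpace E] (hx : 1 ≤ x) :
    ∫ t in (1 : ℝ)..x, (1 / t ^ 2) • summatory f t =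
      ∑ n ∈ Icc 1 ⌊x⌋₊, (1 / n - 1 / x : ℝ) • f n := by
  simp only [summatory, smul_sum]
  rw [intervalIntegral_sum_Icc_floor hx fun n _ =>
    (continuousOn_one_div_pow_Icc 2 one_pos x).integrableOn_Icc.smul_const (f n)]
  refine sum_congr rfl fun n hn => ?_
  obtain ⟨hn1, hnx⟩ := mem_Icc.1 hn
  have hn0 : (0 : ℝ) < n := mod_cast hn1
  rw [intervalIntegral.integral_smul_const,
    integral_one_div_sq hn0 ((Nat.le_floor_iff' (by omega)).1 hnx)]

theorem integral_floor_mul_floor_add_one_smul_summatory (hx : 1 ≤ x) :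
    ∫ t in (1 : ℝ)..x, (⌊x / t⌋₊ * (⌊x / t⌋₊ + 1) : ℝ) • summatory f t =
      (2 : ℝ) • ∫ u in (1 : ℝ)..x, ∑ n ∈ Icc 1 ⌊u⌋₊, summatory f (u / n) := by
  have hrescale (n : ℕ) (hn : n ∈ Icc 1 ⌊x⌋₊) :
      ∫ t in (1 : ℝ)..(x / n), (2 * n : ℝ) • summatory f t =
        (2 : ℝ) • ∫ u in (n : ℝ)..x, summatory f (u / n) := by
    have hn0 : (n : ℝ) ≠ 0 := Nat.cast_ne_zero.2 (Nat.one_le_iff_ne_zero.1 (mem_Icc.1 hn).1)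
    rw [intervalIntegral.integral_comp_div _ hn0, div_self hn0, intervalIntegral.integral_smul,
      mul_smul]
  calc ∫ t in (1 : ℝ)..x, (⌊x / t⌋₊ * (⌊x / t⌋₊ + 1) : ℝ) • summatory f t
      = ∫ t in (1 : ℝ)..x, ∑ n ∈ Icc 1 ⌊x / t⌋₊, (2 * n : ℝ) • summatory f t := by
        simp_rw [← sum_smul, sum_Icc_two_mul_cast]
    _ = ∑ n ∈ Icc 1 ⌊x⌋₊, ∫ t in (1 : ℝ)..(x / n), (2 * n : ℝ) • summatory f t :=
        intervalIntegral_sum_Icc_floor_div hx fun n _ => (integrableOn_summatory f 1 x).smul _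
    _ = (2 : ℝ) • ∑ n ∈ Icc 1 ⌊x⌋₊, ∫ u in (n : ℝ)..x, summatory f (u / n) := by
        rw [smul_sum, sum_congr rfl hrescale]
    _ = (2 : ℝ) • ∫ u in (1 : ℝ)..x, ∑ n ∈ Icc 1 ⌊u⌋₊, summatory f (u / n) := by
        rw [intervalIntegral_sum_Icc_floor hx fun n _ =>
          integrableOn_summatory_div f n.cast_nonneg 1 x]

theorem intervalIntegrable_floor_mul_floor_add_one_smul_summatory (hx : 1 ≤ x) :
    IntervalIntegrable (fun t => (⌊x / t⌋₊ * (⌊x / t⌋₊ + 1) : ℝ) • summatory f t) volume 1 x := by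
  rw [intervalIntegrable_iff_integrableOn_Icc_of_le hx]
  simp_rw [← sum_Icc_two_mul_cast, sum_smul]
  exact integrable_sum_Icc_floor (N := ⌊x⌋₊) (by fun_prop)
    (ae_restrict_of_forall_mem measurableSet_Icc fun t ht =>
      Nat.floor_mono (div_le_self (by linarith) ht.1))
    fun _ _ => (integrableOn_summatory f 1 x).smul _

theorem norm_one_div_sq_smul_sub_floor_smul_le {t : ℝ} (hx : 0 < x) (ht : 0 < t) (v : E) :
    ‖(1 / t ^ 2) • v - (1 / x ^ 2) • (⌊x / t⌋₊ * (⌊x / t⌋₊ + 1) : ℝ) • v‖ ≤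
      1 / x * (‖v‖ / t) := by
  have hy := abs_sq_sub_floor_mul_floor_add_one_le (y := x / t) (by positivity)
  set w : ℝ := ⌊x / t⌋₊ * (⌊x / t⌋₊ + 1)
  calc ‖(1 / t ^ 2) • v - (1 / x ^ 2) • w • v‖
      = ‖(1 / x ^ 2 * ((x / t) ^ 2 - w)) • v‖ := by
        rw [smul_smul, ← sub_smul]
        congr 2
        field_simp
    _ = 1 / x ^ 2 * |(x / t) ^ 2 - w| * ‖v‖ := by
        rw [norm_smul, norm_mul, Real.norm_eq_abs, Real.norm_eq_abs,
          abs_of_nonneg (by positivity : 0 ≤ 1 / x ^ 2)]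
    _ ≤ 1 / x ^ 2 * (x / t) * ‖v‖ := by gcongr
    _ = 1 / x * (‖v‖ / t) := by field_simp

theorem norm_sum_one_div_sub_smul_sub_le [CompleteSpace E] (hx : 1 ≤ x) :
    ‖∑ n ∈ Icc 1 ⌊x⌋₊, (1 / n - 1 / x : ℝ) • f n -
        (2 / x ^ 2) • ∫ u in (1 : ℝ)..x, ∑ n ∈ Icc 1 ⌊u⌋₊, summatory f (u / n)‖ ≤
      1 / x * ∫ t in (1 : ℝ)..x, ‖summatory f t‖ / t := by
  have hF := integrableOn_summatory f 1 x
  have hsq : IntervalIntegrable (fun t => (1 / t ^ 2) • summatory f t) volume 1 x :=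
    (intervalIntegrable_iff_integrableOn_Icc_of_le hx).2
      (hF.continuousOn_smul (continuousOn_one_div_pow_Icc 2 one_pos x) isCompact_Icc)
  have hfloor : IntervalIntegrable (fun t => (1 / x ^ 2) •
      (⌊x / t⌋₊ * (⌊x / t⌋₊ + 1) : ℝ) • summatory f t) volume 1 x :=
    (intervalIntegrable_floor_mul_floor_add_one_smul_summatory f hx).smul (1 / x ^ 2)
  have hnorm : IntervalIntegrable (fun t => ‖summatory f t‖ / t) volume 1 x := by
    rw [intervalIntegrable_iff_integrableOn_Icc_of_le hx]
    simpa [div_eq_mul_inv] using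
      IntegrableOn.mul_continuousOn hF.norm (continuousOn_one_div_pow_Icc 1 one_pos x)
        isCompact_Icc
  calc _ = ‖∫ t in (1 : ℝ)..x, ((1 / t ^ 2) • summatory f t -
          (1 / x ^ 2) • (⌊x / t⌋₊ * (⌊x / t⌋₊ + 1) : ℝ) • summatory f t)‖ := by
        rw [intervalIntegral.integral_sub hsq hfloor, intervalIntegral.integral_smul,
          integral_one_div_sq_smul_summatory f hx,
          integral_floor_mul_floor_add_one_smul_summatory f hx, smul_smul, one_div_mul_eq_div]
    _ ≤ ∫ t in (1 : ℝ)..x, 1 / x * (‖summatory f t‖ / t) :=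
        intervalIntegral.norm_integral_le_of_norm_le hx
          (.of_forall fun t ht =>
            norm_one_div_sq_smul_sub_floor_smul_le (by linarith) (by linarith [ht.1]) _)
          (hnorm.const_mul _)
    _ = 1 / x * ∫ t in (1 : ℝ)..x, ‖summatory f t‖ / t :=
        intervalIntegral.integral_const_mul _ _

end Summatory

theorem sum_Mobius_M_div {u : ℝ} (hu : 1 ≤ u) : ∑ n ∈ Icc 1 ⌊u⌋₊, Mobius_M (u / n) = 1 := by
  have hIoc (N : ℕ) : Ioc 0 N = Icc 1 N := rfl
  have hmul := ArithmeticFunction.sum_Ioc_mul_eq_sum_sum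
    (ArithmeticFunction.zeta : ArithmeticFunction ℝ) ArithmeticFunction.moebius ⌊u⌋₊
  rw [ArithmeticFunction.coe_zeta_mul_coe_moebius, hIoc] at hmul
  calc ∑ n ∈ Icc 1 ⌊u⌋₊, Mobius_M (u / n)
      = ∑ n ∈ Icc 1 ⌊u⌋₊, (1 : ArithmeticFunction ℝ) n := by
        rw [hmul]
        refine sum_congr rfl fun n hn => ?_
        have hn0 : n ≠ 0 := Nat.one_le_iff_ne_zero.1 (mem_Icc.1 hn).1
        simp [Mobius_M, Nat.floor_div_natCast, hIoc, hn0]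
    _ = 1 := by
        simp [ArithmeticFunction.one_apply, Nat.one_le_floor_iff, hu]

theorem integral_sum_Mobius_M_div {x : ℝ} (hx : 1 ≤ x) :
    ∫ u in (1 : ℝ)..x, ∑ n ∈ Icc 1 ⌊u⌋₊, Mobius_M (u / n) = x - 1 := by
  have hone : Set.EqOn (fun u : ℝ => ∑ n ∈ Icc 1 ⌊u⌋₊, Mobius_M (u / n)) (fun _ => 1)
      (Set.uIcc 1 x) := fun u hu => sum_Mobius_M_div (Set.uIcc_of_le hx ▸ hu).1
  rw [intervalIntegral.integral_congr hone, intervalIntegral.integral_const, smul_eq_mul, mul_one]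

theorem abs_Mobius_m1_sub_le {x : ℝ} (hx : 1 ≤ x) :
    |Mobius_m1 x - (2 / x - 2 / x ^ 2)| ≤ 1 / x * ∫ t in (1 : ℝ)..x, |Mobius_M t| / t := by
  have hm1 : Mobius_m1 x = ∑ n ∈ Icc 1 ⌊x⌋₊,
      (1 / n - 1 / x : ℝ) • (ArithmeticFunction.moebius n : ℝ) := by
    simp only [Mobius_m1, smul_eq_mul, mul_comm]
  have hmain : 2 / x - 2 / x ^ 2 =
      (2 / x ^ 2) • ∫ u in (1 : ℝ)..x, ∑ n ∈ Icc 1 ⌊u⌋₊, Mobius_M (u / n) := by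
    rw [integral_sum_Mobius_M_div hx, smul_eq_mul]
    field_simp
  rw [hm1, hmain]
  exact norm_sum_one_div_sub_smul_sub_le (fun n => (ArithmeticFunction.moebius n : ℝ)) hx

/-- For every real `x ≥ 1`,
`|m₁(x)| ≤ (1/x) ∫_1^x |M(t)|/t dt + 2/x - 2/x²`. -/
theorem m1_bound (x : ℝ) (hx : 1 ≤ x) :
    |Mobius_m1 x| ≤ (1 / x) * (∫ t in (1 : ℝ)..x, |Mobius_M t| / t) + 2 / x - 2 / x ^ 2 := by
  have hmain : |2 / x - 2 / x ^ 2| = 2 / x - 2 / x ^ 2 := by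
    refine abs_of_nonneg (sub_nonneg.2 ?_)
    gcongr
    exact le_self_pow₀ hx two_ne_zero
  have htriangle := abs_sub_abs_le_abs_sub (Mobius_m1 x) (2 / x - 2 / x ^ 2)
  linarith [abs_Mobius_m1_sub_le hx]
end

section
/- Let α ≥ 0 be a real number such that limsup_{x → ∞} |M(x)/x| ≤ α. Then limsup_{x → ∞} |m(x)| ≤ 2α. -/
/-!
Let `P(u) = {u}(1 - {u})`. Substituting `{u} = u - ⌊u⌋` gives
`P(u)/u = -u + 2⌊u⌋ + 1 - ⌊u⌋(⌊u⌋ + 1)/u`. When this is summed against `μ(n)` at `u = N/n`, Möbius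
inversion evaluates both floor terms (`∑ μ(n)⌊N/n⌋ = 1`, and likewise
`∑ μ(n) n ⌊N/n⌋(⌊N/n⌋ + 1)/2 = 1`), so the sum equals `-N m(N) + 2 + M(N) - 2/N`. Summation by parts
rewrites the same sum in terms of the `M(n)`, weighted by the increments of `P(u)/u` between
`u = N/(n + 1)` and `u = N/n`. These are at most `1/(n + 1)` in absolute value, because
`|P(u)/u - P(v)/v| ≤ 1 - v/u` for `0 < v ≤ u`. Therefore
`|m(N)| ≤ 2/N + |M(N)|/N + N⁻¹ ∑_{n < N} |M(n)|/(n + 1)`: one `α` comes from the term `|M(N)|/N`,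
the other from the Cesàro mean.
-/

open Filter

/-- `m(x) = ∑_{n ≤ x} μ(n)/n`. -/
noncomputable def Mobius_m (x : ℝ) : ℝ :=
  ∑ n ∈ Finset.Icc 1 ⌊x⌋₊, (ArithmeticFunction.moebius n : ℝ) / n

theorem sum_Ioc_natCast {K : Type*} [Field K] [CharZero K] (q : ℕ) :
    ∑ k ∈ Finset.Ioc 0 q, (k : K) = q * (q + 1) / 2 := by
  induction q with
  | zero => simp
  | succ q ih =>
    rw [Finset.sum_Ioc_succ_top q.zero_le, ih]
    push_cast
    ring

theorem eventually_cesaro_lt {f : ℕ → ℝ} {a b : ℝ} (hf : ∀ᶠ n in atTop, f n ≤ a) (hab : a < b) :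
    ∀ᶠ N : ℕ in atTop, (N : ℝ)⁻¹ * ∑ n ∈ Finset.range N, f n < b := by
  have hmax : Tendsto (fun n => max (f n) a) atTop (nhds a) :=
    tendsto_const_nhds.congr' (hf.mono fun n hn => (max_eq_right hn).symm)
  filter_upwards [hmax.cesaro.eventually_lt_const hab] with N hN
  refine lt_of_le_of_lt ?_ hN
  gcongr
  exact le_max_left _ _

section FractParabola

section Ring

variable {R : Type*} [CommRing R] [LinearOrder R] [FloorRing R]

/-- The `1`-periodic function `{u}(1 - {u})`, a parabolic arch over each interval `[k, k + 1]`.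
Divided by `u` it is the kernel that expresses `x m(x)` through `M`. -/
def fractParabola (u : R) : R := Int.fract u * (1 - Int.fract u)

variable [IsStrictOrderedRing R]

theorem fract_le_self {u : R} (hu : 0 ≤ u) : Int.fract u ≤ u :=
  sub_le_self _ (Int.cast_nonneg (Int.floor_nonneg.2 hu))

theorem fractParabola_nonneg (u : R) : 0 ≤ fractParabola u :=
  mul_nonneg (Int.fract_nonneg u) (sub_nonneg.2 (Int.fract_lt_one u).le)

@[simp]
theorem fractParabola_neg (u : R) : fractParabola (-u) = fractParabola u := by
  unfold fractParabola
  rcases eq_or_ne (Int.fract u) 0 with hu | hu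
  · rw [Int.fract_neg_eq_zero.2 hu, hu]
  · rw [Int.fract_neg hu]
    ring

theorem fractParabola_sub_le_fract_mul {u v : R} (hvu : v ≤ u) :
    fractParabola v - fractParabola u ≤ Int.fract v * (u - v) := by
  rcases (Int.floor_mono hvu).eq_or_lt with hfloor | hfloor
  · have hfract : Int.fract u - Int.fract v = u - v := by
      simp only [Int.fract, hfloor, sub_sub_sub_cancel_right]
    calc fractParabola v - fractParabola u
        = (Int.fract u + Int.fract v - 1) * (u - v) := by
          rw [← hfract, fractParabola, fractParabola]
          ring
      _ ≤ Int.fract v * (u - v) :=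
          mul_le_mul_of_nonneg_right (by linarith [Int.fract_lt_one u]) (sub_nonneg.2 hvu)
  · have hgap : 1 - Int.fract v ≤ u - v := by
      have : (⌊v⌋ : R) + 1 ≤ u := by exact_mod_cast Int.le_floor.1 hfloor
      linarith [Int.floor_add_fract v]
    calc fractParabola v - fractParabola u
        ≤ Int.fract v * (1 - Int.fract v) := sub_le_self _ (fractParabola_nonneg u)
      _ ≤ Int.fract v * (u - v) := mul_le_mul_of_nonneg_left hgap (Int.fract_nonneg v)

theorem fractParabola_sub_le_sub {u v : R} (hvu : v ≤ u) :
    fractParabola u - fractParabola v ≤ u - v :=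
  calc fractParabola u - fractParabola v
      = fractParabola (-u) - fractParabola (-v) := by simp only [fractParabola_neg]
    _ ≤ Int.fract (-u) * (-v - -u) := fractParabola_sub_le_fract_mul (neg_le_neg hvu)
    _ ≤ -v - -u :=
        mul_le_of_le_one_left (sub_nonneg.2 (neg_le_neg hvu)) (Int.fract_lt_one _).le
    _ = u - v := by ring

end Ring

section Field

variable {K : Type*} [Field K] [LinearOrder K] [FloorRing K]

theorem fractParabola_div_self {u : K} (hu : 0 < u) :
    fractParabola u / u = -u + 2 * ⌊u⌋₊ + 1 - ⌊u⌋₊ * (⌊u⌋₊ + 1) / u := by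
  rw [fractParabola, ← Int.self_sub_floor, ← natCast_floor_eq_intCast_floor hu.le]
  field_simp
  ring

variable [IsStrictOrderedRing K]

theorem abs_fractParabola_div_sub_le {u v : K} (hv : 0 < v) (hvu : v ≤ u) :
    |fractParabola u / u - fractParabola v / v| ≤ 1 - v / u := by
  have hu : 0 < u := hv.trans_le hvu
  -- The bound `{v}(u - v)` on the decrease of `P` and the bound `v(1 - {v})` on its value are
  -- complementary: weighted by `v` and `u - v`, they add up to exactly `v(u - v)`.
  have hupper : v * (fractParabola u - fractParabola v) ≤ v * (u - v) :=
    mul_le_mul_of_nonneg_left (fractParabola_sub_le_sub hvu) hv.le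
  have hlower : v * (fractParabola v - fractParabola u) ≤ v * (Int.fract v * (u - v)) :=
    mul_le_mul_of_nonneg_left (fractParabola_sub_le_fract_mul hvu) hv.le
  have hnonneg : 0 ≤ (u - v) * fractParabola v :=
    mul_nonneg (sub_nonneg.2 hvu) (fractParabola_nonneg v)
  have hle : (u - v) * fractParabola v ≤ (u - v) * (v * (1 - Int.fract v)) := by
    refine mul_le_mul_of_nonneg_left ?_ (sub_nonneg.2 hvu)
    exact mul_le_mul_of_nonneg_right (fract_le_self hv.le)
      (sub_nonneg.2 (Int.fract_lt_one v).le)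
  calc |fractParabola u / u - fractParabola v / v|
      = |v * (fractParabola u - fractParabola v) - (u - v) * fractParabola v| / (u * v) := by
        rw [div_sub_div _ _ hu.ne' hv.ne', abs_div, abs_of_pos (mul_pos hu hv)]
        congr 2
        ring
    _ ≤ v * (u - v) / (u * v) := by
        gcongr
        exact abs_le.2 ⟨by linarith, by linarith⟩
    _ = 1 - v / u := by field_simp

theorem abs_fractParabola_natCast_div_sub_le {N n : ℕ} (hN : N ≠ 0) (hn : n ≠ 0) :
    |fractParabola ((N : K) / n) / (N / n)
      - fractParabola ((N : K) / (n + 1 : ℕ)) / (N / (n + 1 : ℕ))| ≤ 1 / (n + 1) := by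
  have : (0 : K) < n := Nat.cast_pos.2 (Nat.pos_of_ne_zero hn)
  have : (0 : K) < N := Nat.cast_pos.2 (Nat.pos_of_ne_zero hN)
  have hle : (N : K) / (n + 1 : ℕ) ≤ N / n := by
    gcongr
    exact n.le_succ
  refine (abs_fractParabola_div_sub_le (by positivity) hle).trans_eq ?_
  push_cast
  field_simp
  norm_num

end Field

end FractParabola

section Moebius

open scoped ArithmeticFunction.Moebius ArithmeticFunction.zeta

theorem pmul_moebius_pow_mul_pow (R : Type*) [CommRing R] (k : ℕ) :
    (μ : ArithmeticFunction R).pmul (ArithmeticFunction.pow k) * ArithmeticFunction.pow k = 1 := by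
  ext n
  rw [← ArithmeticFunction.coe_moebius_mul_coe_zeta]
  have hterm : ∀ p ∈ n.divisorsAntidiagonal,
      (μ : ArithmeticFunction R).pmul (ArithmeticFunction.pow k) p.1 *
        (ArithmeticFunction.pow k : ArithmeticFunction R) p.2 =
      (n : R) ^ k * ((μ : ArithmeticFunction R) p.1 * (ζ : ArithmeticFunction R) p.2) := by
    intro p hp
    obtain ⟨hmul, -⟩ := Nat.mem_divisorsAntidiagonal.1 hp
    have hfst := Nat.left_ne_zero_of_mem_divisorsAntidiagonal hp
    have hsnd := Nat.right_ne_zero_of_mem_divisorsAntidiagonal hp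
    simp only [ArithmeticFunction.pmul_apply, ArithmeticFunction.intCoe_apply,
      ArithmeticFunction.natCoe_apply, ArithmeticFunction.pow_apply,
      ArithmeticFunction.zeta_apply, hfst, hsnd, and_false, if_false, ← hmul]
    push_cast
    ring
  rw [ArithmeticFunction.mul_apply, Finset.sum_congr rfl hterm, ← Finset.mul_sum,
    ← ArithmeticFunction.mul_apply, ArithmeticFunction.coe_moebius_mul_coe_zeta,
    ArithmeticFunction.one_apply]
  split_ifs with hn <;> simp [hn]

theorem sum_moebius_mul_pow_mul_sum_pow (R : Type*) [CommRing R] (k : ℕ) {N : ℕ} (hN : N ≠ 0) :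
    ∑ n ∈ Finset.Ioc 0 N, (μ n * n ^ k * ∑ j ∈ Finset.Ioc 0 (N / n), (j : R) ^ k : R) = 1 := by
  have hsum := ArithmeticFunction.sum_Ioc_mul_eq_sum_sum
    ((μ : ArithmeticFunction R).pmul (ArithmeticFunction.pow k)) (ArithmeticFunction.pow k) N
  rw [pmul_moebius_pow_mul_pow] at hsum
  have hone : ∑ n ∈ Finset.Ioc 0 N, (1 : ArithmeticFunction R) n = 1 := by
    simp [ArithmeticFunction.one_apply, Nat.one_le_iff_ne_zero, hN]
  rw [← hone, hsum]
  have hpow : ∀ {L j : ℕ}, j ∈ Finset.Ioc 0 L →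
      (ArithmeticFunction.pow k : ArithmeticFunction R) j = (j : R) ^ k := by
    intro L j hj
    simp [(Finset.mem_Ioc.1 hj).1.ne']
  refine Finset.sum_congr rfl fun n hn => ?_
  rw [ArithmeticFunction.pmul_apply, hpow hn, Finset.sum_congr rfl fun _ hj => hpow hj,
    ArithmeticFunction.intCoe_apply]

theorem Mobius_m_floor (x : ℝ) : Mobius_m ⌊x⌋₊ = Mobius_m x := by
  simp only [Mobius_m, Nat.floor_natCast]

theorem abs_Mobius_M_le {x : ℝ} (hx : 0 ≤ x) : |Mobius_M x| ≤ x :=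
  calc |Mobius_M x|
      ≤ ∑ n ∈ Finset.Icc 1 ⌊x⌋₊, |(μ n : ℝ)| := Finset.abs_sum_le_sum_abs _ _
    _ ≤ ∑ _n ∈ Finset.Icc 1 ⌊x⌋₊, (1 : ℝ) :=
        Finset.sum_le_sum fun _ _ => by exact_mod_cast ArithmeticFunction.abs_moebius_le_one
    _ = ⌊x⌋₊ := by simp
    _ ≤ x := Nat.floor_le hx

theorem Mobius_M_natCast (N : ℕ) : Mobius_M N = ∑ n ∈ Finset.range (N + 1), (μ n : ℝ) := by
  rw [Mobius_M, Nat.floor_natCast, Finset.sum_range_eq_add_Ico _ N.succ_pos]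
  simp [Finset.Ico_add_one_right_eq_Icc]

theorem sum_moebius_mul_eq_by_parts (f : ℕ → ℝ) (N : ℕ) :
    ∑ n ∈ Finset.Ioc 0 N, μ n * f n =
      Mobius_M N * f N + ∑ n ∈ Finset.range N, Mobius_M n * (f n - f (n + 1)) := by
  have hparts := Finset.sum_range_by_parts f (fun n => (μ n : ℝ)) (N + 1)
  simp only [smul_eq_mul, Nat.add_sub_cancel, ← Mobius_M_natCast] at hparts
  have hrange : ∑ n ∈ Finset.Ioc 0 N, μ n * f n = ∑ n ∈ Finset.range (N + 1), f n * μ n := by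
    rw [Finset.sum_range_eq_add_Ico _ N.succ_pos, ArithmeticFunction.map_zero, Int.cast_zero,
      mul_zero, zero_add]
    exact Finset.sum_congr rfl fun n _ => mul_comm _ _
  rw [hrange, hparts, sub_eq_add_neg, ← Finset.sum_neg_distrib, mul_comm]
  congr 1
  exact Finset.sum_congr rfl fun n _ => by ring

theorem sum_moebius_mul_fractParabola_div {N : ℕ} (hN : N ≠ 0) :
    ∑ n ∈ Finset.Ioc 0 N, μ n * (fractParabola ((N : ℝ) / n) / (N / n)) =
      -(N * Mobius_m N) + 2 + Mobius_M N - 2 / N := by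
  have hfloor : ∑ n ∈ Finset.Ioc 0 N, (μ n * (N / n : ℕ) : ℝ) = 1 := by
    simpa using sum_moebius_mul_pow_mul_sum_pow ℝ 0 hN
  have htriangle :
      ∑ n ∈ Finset.Ioc 0 N, (μ n * n * ((N / n : ℕ) * ((N / n : ℕ) + 1) / 2) : ℝ) = 1 := by
    simpa [sum_Ioc_natCast] using sum_moebius_mul_pow_mul_sum_pow ℝ 1 hN
  have hterm : ∀ n ∈ Finset.Ioc 0 N, μ n * (fractParabola ((N : ℝ) / n) / (N / n)) =
      -(N * (μ n / n)) + 2 * (μ n * (N / n : ℕ)) + μ n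
        - 2 / N * (μ n * n * ((N / n : ℕ) * ((N / n : ℕ) + 1) / 2)) := by
    intro n hn
    have hn' : (0 : ℝ) < n := Nat.cast_pos.2 (Finset.mem_Ioc.1 hn).1
    have hN' : (0 : ℝ) < N := Nat.cast_pos.2 (Nat.pos_of_ne_zero hN)
    rw [fractParabola_div_self (div_pos hN' hn'), Nat.floor_div_eq_div]
    field_simp
  rw [Finset.sum_congr rfl hterm, Finset.sum_sub_distrib, Finset.sum_add_distrib,
    Finset.sum_add_distrib, Finset.sum_neg_distrib, ← Finset.mul_sum, ← Finset.mul_sum,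
    ← Finset.mul_sum, hfloor, htriangle, Mobius_m, Mobius_M, Nat.floor_natCast, mul_one, mul_one]
  rfl

theorem abs_sum_moebius_mul_fractParabola_div_le (N : ℕ) :
    |∑ n ∈ Finset.Ioc 0 N, μ n * (fractParabola ((N : ℝ) / n) / (N / n))| ≤
      ∑ n ∈ Finset.range N, |Mobius_M n| / (n + 1) := by
  set F : ℕ → ℝ := fun n => fractParabola ((N : ℝ) / n) / (N / n)
  have hF : F N = 0 := by
    rcases eq_or_ne N 0 with rfl | hN <;> simp [F, fractParabola, *]
  rw [sum_moebius_mul_eq_by_parts F, hF, mul_zero, zero_add]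
  refine (Finset.abs_sum_le_sum_abs _ _).trans (Finset.sum_le_sum fun n hn => ?_)
  rw [abs_mul, div_eq_mul_one_div]
  rcases eq_or_ne n 0 with rfl | hn'
  · simp [Mobius_M]
  · exact mul_le_mul_of_nonneg_left
      (abs_fractParabola_natCast_div_sub_le (Finset.mem_range.1 hn).ne_bot hn') (abs_nonneg _)

theorem natCast_mul_abs_Mobius_m_le {N : ℕ} (hN : N ≠ 0) :
    N * |Mobius_m N| ≤ 2 + |Mobius_M N| + ∑ n ∈ Finset.range N, |Mobius_M n| / (n + 1) := by
  have hsum := abs_sum_moebius_mul_fractParabola_div_le N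
  rw [sum_moebius_mul_fractParabola_div hN] at hsum
  have hnonneg : 0 ≤ 2 / (N : ℝ) := by positivity
  have hle : 2 / (N : ℝ) ≤ 2 :=
    div_le_self zero_le_two (by exact_mod_cast Nat.one_le_iff_ne_zero.2 hN)
  obtain ⟨hlower, hupper⟩ := abs_le.1 hsum
  obtain ⟨hMlower, hMupper⟩ := abs_le.1 (le_refl |Mobius_M N|)
  rw [← Nat.abs_cast N, ← abs_mul, Nat.abs_cast]
  exact abs_le.2 ⟨by linarith, by linarith⟩

end Moebius

theorem isBoundedUnder_abs_Mobius_M_div :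
    IsBoundedUnder (· ≤ ·) atTop fun x : ℝ => |Mobius_M x / x| := by
  refine isBoundedUnder_of_eventually_le (a := 1) ?_
  filter_upwards [eventually_ge_atTop 0] with x hx
  rw [abs_div, abs_of_nonneg hx]
  exact div_le_one_of_le₀ (abs_Mobius_M_le hx) hx

theorem eventually_abs_Mobius_m_lt {a b : ℝ} (h : ∀ᶠ n : ℕ in atTop, |Mobius_M n / n| ≤ a)
    (hab : 2 * a < b) : ∀ᶠ N : ℕ in atTop, |Mobius_m N| < b := by
  have hδ : 0 < (b - 2 * a) / 2 := by linarith
  have hmean : ∀ᶠ n : ℕ in atTop, |Mobius_M n| / (n + 1) ≤ a := by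
    filter_upwards [h, eventually_gt_atTop 0] with n hn hpos
    refine le_trans ?_ hn
    rw [abs_div, Nat.abs_cast]
    gcongr
    exact (lt_add_one _).le
  have hconst : ∀ᶠ N : ℕ in atTop, 2 / (N : ℝ) < (b - 2 * a) / 2 :=
    (tendsto_const_div_atTop_nhds_zero_nat 2).eventually_lt_const hδ
  filter_upwards [h, hconst, eventually_cesaro_lt hmean (lt_add_of_pos_right a hδ),
    eventually_ne_atTop 0] with N hM htwo hcesaro hN
  have hN' : (0 : ℝ) < N := Nat.cast_pos.2 (Nat.pos_of_ne_zero hN)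
  rw [abs_div, Nat.abs_cast] at hM
  calc |Mobius_m N|
      ≤ (2 + |Mobius_M N| + ∑ n ∈ Finset.range N, |Mobius_M n| / (n + 1)) / N := by
        rw [le_div_iff₀' hN']
        exact natCast_mul_abs_Mobius_m_le hN
    _ = 2 / N + |Mobius_M N| / N
          + (N : ℝ)⁻¹ * ∑ n ∈ Finset.range N, |Mobius_M n| / (n + 1) := by
        ring
    _ < b := by linarith

/-- If `limsup_{x→∞} |M(x)/x| ≤ α` then `limsup_{x→∞} |m(x)| ≤ 2α`. -/
theorem limsup_m_le (α : ℝ) (hα : 0 ≤ α)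
    (h : limsup (fun x : ℝ => |Mobius_M x / x|) atTop ≤ α) :
    limsup (fun x : ℝ => |Mobius_m x|) atTop ≤ 2 * α := by
  refine le_of_forall_gt_imp_ge_of_dense fun b hb => ?_
  obtain ⟨a, hαa, hab⟩ : ∃ a, α < a ∧ a < b / 2 := exists_between (by linarith)
  have hM : ∀ᶠ n : ℕ in atTop, |Mobius_M n / n| ≤ a :=
    tendsto_natCast_atTop_atTop.eventually
      ((eventually_lt_of_limsup_lt (h.trans_lt hαa)
        isBoundedUnder_abs_Mobius_M_div).mono fun _ => le_of_lt)
  have hm : ∀ᶠ x : ℝ in atTop, |Mobius_m x| < b := by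
    simpa only [Mobius_m_floor] using
      (tendsto_nat_floor_atTop (α := ℝ)).eventually (eventually_abs_Mobius_m_lt hM (by linarith))
  exact limsup_le_of_le (isCoboundedUnder_le_of_le atTop fun x => abs_nonneg _)
    (hm.mono fun _ => le_of_lt)
end

section
/- For every positive integer k, there exist positive real constants C_k and D_k such that for all real x > 0, |m₁(x)| ≤ C_k x^{1−k} ∫_1^x |M(t)| t^{k−3} dt + D_k/x. (Here m₁(x) = 0 for 0 < x < 1.) -/
/-!
Let `φ` be smooth, supported in `(0, 1)`, with integral `1`. Summing over the multiples of `n`,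
Möbius inversion gives `∑_{n ≤ x} μ(n) ∑_m φ(m n / x) = φ(1/x)`, while the inner sum approximates
`x / n`. Hence `x m₁(x) - φ(1/x) = ∑_{n ≤ x} μ(n) F(n/x)` with `F(s) = 1/s - 1 - ∑_m φ(m s)`, and
partial summation rewrites the right-hand side as `-∫_1^x M(t) F'(t/x) dt / x`, because `F(1) = 0`.
Now `-s F'(s) = 1/s + ∑_m ψ(m s)` for `ψ(u) = u φ'(u)`, whose integral is `-1`, so Poisson summation
cancels the main term and makes `F'(s)` smaller than any power of `s` on `(0, 1]`.
-/

open MeasureTheory FourierTransform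
open scoped ContDiff SchwartzMap ArithmeticFunction.Moebius

open Finset in
theorem sum_moebius_mul_sum_multiples {R : Type*} [Ring R] {X : ℕ} {f : ℕ → R}
    (hf : ∀ N, X < N → f N = 0) :
    ∑ n ∈ Icc 1 X, (μ n : R) * ∑ m ∈ Icc 1 X, f (n * m) = f 1 := by
  have hfiber (N : ℕ) (hN : N ∈ Icc 1 X) :
      {p ∈ Icc 1 X ×ˢ Icc 1 X | p.1 * p.2 = N} = N.divisorsAntidiagonal := by
    rw [mem_Icc] at hN
    exact (Nat.divisorsAntidiagonal_eq_prod_filter_of_le (by lia) hN.2).symm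
  have hmoebius (N : ℕ) : ∑ p ∈ N.divisorsAntidiagonal, (μ p.1 : R) = if N = 1 then 1 else 0 := by
    rw [Nat.sum_divisorsAntidiagonal (fun d _ ↦ (μ d : R)), ← ArithmeticFunction.one_apply,
      ← ArithmeticFunction.coe_moebius_mul_coe_zeta, ArithmeticFunction.coe_mul_zeta_apply]
    simp
  calc ∑ n ∈ Icc 1 X, (μ n : R) * ∑ m ∈ Icc 1 X, f (n * m)
      = ∑ p ∈ Icc 1 X ×ˢ Icc 1 X with p.1 * p.2 ∈ Icc 1 X, (μ p.1 : R) * f (p.1 * p.2) := by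
        simp_rw [mul_sum]
        rw [← sum_product' (f := fun n m ↦ (μ n : R) * f (n * m)), sum_filter_of_ne]
        intro p hp hne
        rw [mem_product, mem_Icc, mem_Icc] at hp
        refine mem_Icc.2 ⟨Nat.mul_pos hp.1.1 hp.2.1, ?_⟩
        contrapose! hne
        rw [hf _ hne, mul_zero]
    _ = ∑ N ∈ Icc 1 X, (∑ p ∈ N.divisorsAntidiagonal, (μ p.1 : R)) * f N := by
        rw [← sum_fiberwise_eq_sum_filter]
        refine sum_congr rfl fun N hN ↦ ?_
        rw [← hfiber N hN, sum_mul]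
        exact sum_congr rfl fun p hp ↦ by rw [(mem_filter.1 hp).2]
    _ = f 1 := by
        simp only [hmoebius, ite_mul, one_mul, zero_mul, sum_ite_eq', mem_Icc, le_refl, true_and]
        grind

theorem fourier_comp_mul_right {E : Type*} [NormedAddCommGroup E] [NormedSpace ℂ E]
    (f : ℝ → E) {a : ℝ} (ha : a ≠ 0) (w : ℝ) :
    𝓕 (fun u ↦ f (u * a)) w = |a⁻¹| • 𝓕 f (w / a) := by
  rw [Real.fourier_real_eq, Real.fourier_real_eq, ← Measure.integral_comp_mul_right _ a]
  congr! 4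
  field_simp

theorem tsum_int_mul_eq_tsum_fourier_int_div (f : 𝓢(ℝ, ℂ)) {s : ℝ} (hs : 0 < s) :
    ∑' m : ℤ, f (m * s) = (s : ℂ)⁻¹ * ∑' n : ℤ, 𝓕 f (n / s) := by
  let dilation : ℝ ≃L[ℝ] ℝ := ContinuousLinearEquiv.unitsEquivAut ℝ (Units.mk0 s hs.ne')
  have hfourier (n : ℤ) :
      𝓕 (SchwartzMap.compCLMOfContinuousLinearEquiv ℝ dilation f) n = (s : ℂ)⁻¹ * 𝓕 f (n / s) := by
    have := fourier_comp_mul_right f hs.ne' n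
    rw [abs_of_pos (inv_pos.2 hs), Complex.real_smul, Complex.ofReal_inv] at this
    exact this
  simpa [hfourier, dilation, tsum_mul_left] using
    (SchwartzMap.compCLMOfContinuousLinearEquiv ℝ dilation f).tsum_eq_tsum_fourier 0

section SchwartzDecay

variable {E : Type*} [NormedAddCommGroup E] [NormedSpace ℝ E]

theorem exists_norm_schwartz_int_div_le (h : 𝓢(ℝ, E)) (N : ℕ) :
    ∃ C : ℝ, ∀ s ∈ Set.Ioc (0 : ℝ) 1, ∀ n : ℤ, n ≠ 0 →
      ‖h (n / s)‖ ≤ C * s ^ N * (1 / (n : ℝ) ^ 2) := by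
  obtain ⟨C, hC, hdecay⟩ := h.decay (N + 2) 0
  refine ⟨C, fun s ⟨hs0, hs1⟩ n hn ↦ ?_⟩
  have hn1 : (1 : ℝ) ≤ |(n : ℝ)| := by exact_mod_cast Int.one_le_abs hn
  have hpow : (|(n / s : ℝ)| ^ (N + 2))⁻¹ ≤ s ^ N * (1 / (n : ℝ) ^ 2) := by
    rw [abs_div, abs_of_pos hs0, ← sq_abs (n : ℝ), div_pow, inv_div, pow_add, pow_add, mul_one_div]
    gcongr
    · exact mul_le_of_le_one_right (by positivity) (pow_le_one₀ hs0.le hs1)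
    · exact le_mul_of_one_le_left (by positivity) (one_le_pow₀ hn1)
  have hbound := hdecay (n / s)
  rw [norm_iteratedFDeriv_zero, Real.norm_eq_abs, ← le_div_iff₀' (by positivity)] at hbound
  rw [mul_assoc]
  exact hbound.trans (mul_le_mul_of_nonneg_left hpow hC.le)

theorem exists_norm_tsum_schwartz_int_div_sub_le [CompleteSpace E] (h : 𝓢(ℝ, E)) (N : ℕ) :
    ∃ C : ℝ, ∀ s ∈ Set.Ioc (0 : ℝ) 1, ‖∑' n : ℤ, h (n / s) - h 0‖ ≤ C * s ^ N := by
  obtain ⟨C, hC⟩ := exists_norm_schwartz_int_div_le h N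
  refine ⟨C * ∑' n : ℤ, 1 / (n : ℝ) ^ 2, fun s hs ↦ ?_⟩
  have hmajorant : Summable fun n : ℤ ↦ C * s ^ N * (1 / (n : ℝ) ^ 2) :=
    (Real.summable_one_div_int_pow.2 one_lt_two).mul_left _
  have hbound (n : ℤ) : ‖if n = 0 then 0 else h (n / s)‖ ≤ C * s ^ N * (1 / (n : ℝ) ^ 2) := by
    split_ifs with hn
    · simp [hn]
    · exact hC s hs n hn
  have hsummable : Summable fun n : ℤ ↦ h (n / s) :=
    (Summable.of_norm_bounded hmajorant hbound).congr_cofinite <| by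
      filter_upwards [Filter.eventually_cofinite_ne (0 : ℤ)] with n hn using if_neg hn
  rw [hsummable.tsum_eq_add_tsum_ite 0, Int.cast_zero, zero_div, add_sub_cancel_left,
    mul_right_comm, ← tsum_mul_left]
  exact tsum_of_norm_bounded hmajorant.hasSum hbound

end SchwartzDecay

theorem exists_abs_tsum_int_mul_sub_integral_le {g : ℝ → ℝ} (hg : ContDiff ℝ ∞ g)
    (hc : HasCompactSupport g) (N : ℕ) :
    ∃ C : ℝ, ∀ s ∈ Set.Ioc (0 : ℝ) 1, |∑' m : ℤ, g (m * s) - s⁻¹ * ∫ u, g u| ≤ C * s ^ N := by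
  let G : 𝓢(ℝ, ℂ) := (hc.comp_left (g := ((↑) : ℝ → ℂ)) rfl).toSchwartzMap
    (Complex.ofRealCLM.contDiff.comp hg)
  have hG0 : 𝓕 G 0 = ((∫ u, g u : ℝ) : ℂ) := by
    rw [SchwartzMap.fourier_coe, Real.fourier_real_eq, ← integral_complex_ofReal]
    simp only [mul_zero, neg_zero, AddChar.map_zero_eq_one, one_smul]
    rfl
  obtain ⟨C, hC⟩ := exists_norm_tsum_schwartz_int_div_sub_le (𝓕 G) (N + 1)
  refine ⟨C, fun s hs ↦ ?_⟩
  have hpoisson : ((∑' m : ℤ, g (m * s) - s⁻¹ * ∫ u, g u : ℝ) : ℂ)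
      = (s : ℂ)⁻¹ * (∑' n : ℤ, 𝓕 G (n / s) - 𝓕 G 0) := by
    rw [mul_sub, ← tsum_int_mul_eq_tsum_fourier_int_div G hs.1, hG0]
    push_cast
    rfl
  rw [← Real.norm_eq_abs, ← Complex.norm_real, hpoisson, norm_mul, norm_inv, Complex.norm_real,
    Real.norm_of_nonneg hs.1.le, inv_mul_le_iff₀ hs.1]
  exact (hC s hs).trans_eq (by ring)

theorem integral_id_mul_deriv_eq_neg_integral {g : ℝ → ℝ} (hg : ContDiff ℝ 1 g)
    (hc : HasCompactSupport g) : ∫ u, u * deriv g u = -∫ u, g u := by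
  have hg' : Continuous (deriv g) := hg.continuous_deriv_one
  simpa using integral_mul_deriv_eq_deriv_mul_of_integrable (v := g)
    (fun u _ ↦ hasDerivAt_id u) (fun u _ ↦ (hg.differentiable_one u).hasDerivAt)
    ((continuous_id.mul hg').integrable_of_hasCompactSupport hc.deriv.mul_left)
    ((continuous_const.mul hg.continuous).integrable_of_hasCompactSupport hc.mul_left)
    ((continuous_id.mul hg.continuous).integrable_of_hasCompactSupport hc.mul_left)

theorem hasCompactSupport_of_tsupport_subset_Ioo {g : ℝ → ℝ} {a b : ℝ}
    (hg : tsupport g ⊆ Set.Ioo a b) : HasCompactSupport g :=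
  isCompact_Icc.of_isClosed_subset (isClosed_tsupport g) (hg.trans Set.Ioo_subset_Icc_self)

/-- The sum `∑_{m ≥ 1} φ (m s)`, cut off at `m ≤ X`. For `φ` supported in `(0, 1)` nothing is lost
as soon as `1 ≤ (X + 1) s`; the cut-off makes the sum finite uniformly in `s`. -/
noncomputable def dilateSum (φ : ℝ → ℝ) (X : ℕ) (s : ℝ) : ℝ :=
  ∑ m ∈ Finset.Icc 1 X, φ (m * s)

/-- The error in replacing `s⁻¹` by the dilate sum of `φ`, normalised (by `-1`) so that it vanishes
at `s = 1` when `φ` is supported in `(0, 1)`. -/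
noncomputable def dilateDefect (φ : ℝ → ℝ) (X : ℕ) (s : ℝ) : ℝ :=
  s⁻¹ - 1 - dilateSum φ X s

section DilateSum

variable {φ : ℝ → ℝ} {X : ℕ} {s : ℝ}

theorem pos_of_one_le_add_one_mul (hs : 1 ≤ (X + 1) * s) : 0 < s :=
  pos_of_mul_pos_right (zero_lt_one.trans_le hs) (by positivity)

theorem one_le_natCast_mul_of_lt (hs : 1 ≤ (X + 1) * s) {m : ℕ} (hm : X < m) : 1 ≤ m * s := by
  have hs0 : 0 < s := pos_of_one_le_add_one_mul hs
  have : (X : ℝ) + 1 ≤ m := by exact_mod_cast hm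
  exact hs.trans (by gcongr)

theorem dilateSum_one (hφ : φ.support ⊆ Set.Iio 1) : dilateSum φ X 1 = 0 := by
  refine Finset.sum_eq_zero fun m hm ↦ ?_
  refine Function.notMem_support.1 fun h ↦ (Set.mem_Iio.1 (hφ h)).not_ge ?_
  rw [mul_one]
  exact_mod_cast (Finset.mem_Icc.1 hm).1

theorem sum_moebius_mul_dilateSum (hφ : φ.support ⊆ Set.Iio 1) (hs : 1 ≤ (X + 1) * s) :
    ∑ n ∈ Finset.Icc 1 X, (μ n : ℝ) * dilateSum φ X (n * s) = φ s := by
  have hvanish (N : ℕ) (hN : X < N) : φ (N * s) = 0 :=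
    Function.notMem_support.1 fun h ↦ (hφ h).not_ge (one_le_natCast_mul_of_lt hs hN)
  have := sum_moebius_mul_sum_multiples hvanish
  simp only [Nat.cast_mul, Nat.cast_one, one_mul] at this
  simpa only [dilateSum, mul_left_comm, mul_assoc] using this

theorem tsum_int_mul_eq_dilateSum (hφ : φ.support ⊆ Set.Ioo 0 1) (hs : 1 ≤ (X + 1) * s) :
    ∑' m : ℤ, φ (m * s) = dilateSum φ X s := by
  have hs0 : 0 < s := pos_of_one_le_add_one_mul hs
  rw [dilateSum, tsum_eq_sum (s := (Finset.Icc 1 X).map Nat.castEmbedding), Finset.sum_map]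
  · simp
  · intro m hm
    refine Function.notMem_support.1 fun h ↦ hm ?_
    obtain ⟨hpos, hlt⟩ := hφ h
    have hm0 : 0 < m := by exact_mod_cast pos_of_mul_pos_left hpos hs0.le
    lift m to ℕ using hm0.le
    refine Finset.mem_map_of_mem Nat.castEmbedding (Finset.mem_Icc.2 ⟨by exact_mod_cast hm0, ?_⟩)
    by_contra! hX
    exact hlt.not_ge (one_le_natCast_mul_of_lt hs hX)

theorem hasDerivAt_dilateSum (hφ : Differentiable ℝ φ) (hs : s ≠ 0) :
    HasDerivAt (dilateSum φ X) (dilateSum (fun u ↦ u * deriv φ u) X s / s) s := by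
  have hterm (m : ℕ) : HasDerivAt (fun s : ℝ ↦ φ (m * s)) (m * s * deriv φ (m * s) / s) s :=
    ((hφ (m * s)).hasDerivAt.comp s ((hasDerivAt_id s).const_mul (m : ℝ))).congr_deriv
      (by field_simp)
  rw [dilateSum, Finset.sum_div]
  exact HasDerivAt.fun_sum fun m _ ↦ hterm m

theorem hasDerivAt_dilateDefect (hφ : Differentiable ℝ φ) (hs : s ≠ 0) :
    HasDerivAt (dilateDefect φ X) (-(dilateSum (fun u ↦ u * deriv φ u) X s + s⁻¹) / s) s :=
  (((hasDerivAt_inv hs).sub_const 1).sub (hasDerivAt_dilateSum hφ hs)).congr_deriv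
    (by field_simp; ring)

theorem dilateDefect_one (hφ : φ.support ⊆ Set.Iio 1) : dilateDefect φ X 1 = 0 := by
  simp [dilateDefect, dilateSum_one hφ]

theorem exists_abs_deriv_dilateDefect_le (hφ : ContDiff ℝ ∞ φ) (hsupp : tsupport φ ⊆ Set.Ioo 0 1)
    (hint : ∫ u, φ u = 1) (a : ℝ) :
    ∃ C : ℝ, 0 < C ∧ ∀ (X : ℕ) (s : ℝ), s ≤ 1 → 1 ≤ (X + 1) * s →
      |deriv (dilateDefect φ X) s| ≤ C * s ^ a := by
  have hc := hasCompactSupport_of_tsupport_subset_Ioo hsupp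
  have hψ : ContDiff ℝ ∞ fun u ↦ u * deriv φ u := contDiff_id.mul (contDiff_infty_iff_deriv.1 hφ).2
  have hψsupp : Function.support (fun u ↦ u * deriv φ u) ⊆ Set.Ioo 0 1 :=
    (Function.support_mul_subset_right _ _).trans (support_deriv_subset.trans hsupp)
  have hψint : ∫ u, u * deriv φ u = -1 := by
    rw [integral_id_mul_deriv_eq_neg_integral (hφ.of_le (by simp)) hc, hint]
  obtain ⟨C, hC⟩ := exists_abs_tsum_int_mul_sub_integral_le hψ hc.deriv.mul_left (⌈a⌉₊ + 1)
  refine ⟨max C 1, by positivity, fun X s hs1 hs ↦ ?_⟩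
  have hs0 := pos_of_one_le_add_one_mul hs
  have hpoisson := hC s ⟨hs0, hs1⟩
  rw [tsum_int_mul_eq_dilateSum hψsupp hs, hψint, mul_neg_one, sub_neg_eq_add] at hpoisson
  rw [(hasDerivAt_dilateDefect (hφ.differentiable (by simp)) hs0.ne').deriv, abs_div, abs_neg,
    abs_of_pos hs0, div_le_iff₀ hs0]
  calc _ ≤ C * s ^ (⌈a⌉₊ + 1) := hpoisson
    _ = C * s ^ (⌈a⌉₊ : ℝ) * s := by rw [Real.rpow_natCast]; ring
    _ ≤ max C 1 * s ^ a * s := by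
      gcongr ?_ * ?_ * s
      · exact le_max_left _ _
      · exact Real.rpow_le_rpow_of_exponent_ge hs0 hs1 (Nat.le_ceil a)

theorem hasDerivAt_dilateDefect_div (hφ : Differentiable ℝ φ) {x t : ℝ} (htx : t / x ≠ 0) :
    HasDerivAt (fun t ↦ dilateDefect φ X (t / x)) (deriv (dilateDefect φ X) (t / x) / x) t := by
  have hcomp := (hasDerivAt_dilateDefect (X := X) hφ htx).differentiableAt.hasDerivAt.comp t
    ((hasDerivAt_id t).div_const x)
  rwa [mul_one_div] at hcomp

theorem continuous_dilateSum (hφ : Continuous φ) : Continuous (dilateSum φ X) :=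
  continuous_finsetSum _ fun _ _ ↦ hφ.comp (continuous_const.mul continuous_id)

theorem continuousOn_deriv_dilateDefect (hφ : ContDiff ℝ 1 φ) :
    ContinuousOn (deriv (dilateDefect φ X)) {0}ᶜ := by
  have hsum : Continuous (dilateSum (fun u ↦ u * deriv φ u) X) :=
    continuous_dilateSum (continuous_id.mul hφ.continuous_deriv_one)
  exact ((hsum.continuousOn.add continuousOn_inv₀).neg.div continuousOn_id fun _ hs ↦ hs).congr
    fun s hs ↦ (hasDerivAt_dilateDefect hφ.differentiable_one hs).deriv

theorem continuousOn_deriv_dilateDefect_div (hφ : ContDiff ℝ 1 φ) {x : ℝ} (hx : 0 < x) :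
    ContinuousOn (fun t ↦ deriv (dilateDefect φ X) (t / x) / x) (Set.Icc 1 x) :=
  ((continuousOn_deriv_dilateDefect hφ).comp (continuousOn_id.div_const x) fun _ ht ↦
    (div_pos (zero_lt_one.trans_le ht.1) hx).ne').div_const x

end DilateSum

theorem exists_contDiff_tsupport_subset_Ioo_integral_eq_one :
    ∃ φ : ℝ → ℝ, ContDiff ℝ ∞ φ ∧ tsupport φ ⊆ Set.Ioo 0 1 ∧ ∫ u, φ u = 1 := by
  let f : ContDiffBump (1 / 2 : ℝ) := ⟨1 / 8, 1 / 4, by norm_num, by norm_num⟩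
  refine ⟨f.normed volume, f.contDiff_normed, ?_, f.integral_normed⟩
  rw [f.tsupport_normed_eq, Real.closedBall_eq_Icc]
  exact Set.Icc_subset_Ioo (by norm_num) (by norm_num)

theorem sum_Icc_zero_eq_sum_Icc_one {R : Type*} [AddCommMonoid R] {f : ℕ → R} (hf : f 0 = 0)
    (N : ℕ) : ∑ n ∈ Finset.Icc 0 N, f n = ∑ n ∈ Finset.Icc 1 N, f n := by
  rw [← Finset.sum_Ioc_add_eq_sum_Icc N.zero_le, hf, add_zero, ← Finset.Icc_add_one_left_eq_Ioc,
    zero_add]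

theorem sum_Icc_zero_moebius (x : ℝ) : ∑ n ∈ Finset.Icc 0 ⌊x⌋₊, (μ n : ℝ) = Mobius_M x :=
  sum_Icc_zero_eq_sum_Icc_one (by simp) _

section MoebiusSums

variable {x : ℝ} {φ : ℝ → ℝ}

theorem Mobius_M_of_lt_one (hx : x < 1) : Mobius_M x = 0 := by
  simp [Mobius_M, Nat.floor_eq_zero.2 hx]

theorem Mobius_m1_of_lt_one (hx : x < 1) : Mobius_m1 x = 0 := by
  simp [Mobius_m1, Nat.floor_eq_zero.2 hx]

theorem one_le_floor_add_one_mul_div {t : ℝ} (hx : 0 < x) (ht : 1 ≤ t) :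
    1 ≤ (⌊x⌋₊ + 1) * (t / x) := by
  rw [← mul_div_assoc, one_le_div hx]
  exact (Nat.lt_floor_add_one x).le.trans (le_mul_of_one_le_right (by positivity) ht)

theorem mul_Mobius_m1_eq (hφ : φ.support ⊆ Set.Iio 1) (hx : 0 < x) :
    x * Mobius_m1 x
      = φ x⁻¹ + ∑ n ∈ Finset.Icc 1 ⌊x⌋₊, dilateDefect φ ⌊x⌋₊ (n / x) * μ n := by
  have hcut : 1 ≤ (⌊x⌋₊ + 1) * x⁻¹ := by simpa using one_le_floor_add_one_mul_div hx le_rfl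
  rw [← sum_moebius_mul_dilateSum hφ hcut, Mobius_m1, Finset.mul_sum, ← Finset.sum_add_distrib]
  refine Finset.sum_congr rfl fun n _ ↦ ?_
  rw [dilateDefect, div_eq_mul_inv]
  field_simp
  ring

theorem sum_mul_moebius_eq_sub_integral {f f' : ℝ → ℝ}
    (hf : ∀ t ∈ Set.Icc 1 x, HasDerivAt f (f' t) t) (hf' : ContinuousOn f' (Set.Icc 1 x)) :
    ∑ n ∈ Finset.Icc 1 ⌊x⌋₊, f n * μ n
      = f x * Mobius_M x - ∫ t in Set.Ioc 1 x, f' t * Mobius_M t := by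
  have hderiv : Set.EqOn (deriv f) f' (Set.Icc 1 x) := fun t ht ↦ (hf t ht).deriv
  have habel := sum_mul_eq_sub_integral_mul₀ (fun n ↦ (μ n : ℝ)) (by simp) x
    (fun t ht ↦ (hf t ht).differentiableAt) (hf'.congr hderiv).integrableOn_Icc
  rw [sum_Icc_zero_eq_sum_Icc_one (by simp)] at habel
  simp only [sum_Icc_zero_moebius] at habel
  rw [habel]
  congr 1
  exact setIntegral_congr_fun measurableSet_Ioc fun t ht ↦
    congrArg (· * Mobius_M t) (hderiv (Set.Ioc_subset_Icc_self ht))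

theorem integrableOn_abs_Mobius_M_mul {g : ℝ → ℝ} (hg : ContinuousOn g (Set.Icc 1 x)) :
    IntegrableOn (fun t ↦ |Mobius_M t| * g t) (Set.Icc 1 x) := by
  have hM : IntegrableOn Mobius_M (Set.Icc 1 x) := by
    simpa [sum_Icc_zero_moebius] using integrableOn_mul_sum_Icc (fun n ↦ (μ n : ℝ)) (m := 0)
      zero_le_one (integrableOn_const (C := (1 : ℝ)) (s := Set.Icc 1 x) measure_Icc_lt_top.ne)
  exact IntegrableOn.mul_continuousOn hM.norm hg isCompact_Icc

theorem abs_sum_mul_moebius_le_integral {f f' g : ℝ → ℝ}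
    (hf : ∀ t ∈ Set.Icc 1 x, HasDerivAt f (f' t) t) (hf' : ContinuousOn f' (Set.Icc 1 x))
    (hfx : f x = 0) (hg : ContinuousOn g (Set.Icc 1 x))
    (hfg : ∀ t ∈ Set.Icc 1 x, |f' t| ≤ g t) :
    |∑ n ∈ Finset.Icc 1 ⌊x⌋₊, f n * μ n| ≤ ∫ t in Set.Ioc 1 x, |Mobius_M t| * g t := by
  rw [sum_mul_moebius_eq_sub_integral hf hf', hfx, zero_mul, zero_sub, abs_neg,
    ← Real.norm_eq_abs]
  refine norm_integral_le_of_norm_le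
    ((integrableOn_abs_Mobius_M_mul hg).mono_set Set.Ioc_subset_Icc_self) ?_
  filter_upwards [ae_restrict_mem measurableSet_Ioc] with t ht
  rw [norm_mul, mul_comm]
  exact mul_le_mul_of_nonneg_left (hfg t (Set.Ioc_subset_Icc_self ht)) (norm_nonneg _)

theorem exists_abs_sum_dilateDefect_mul_moebius_le (hφ : ContDiff ℝ ∞ φ)
    (hsupp : tsupport φ ⊆ Set.Ioo 0 1) (hint : ∫ u, φ u = 1) (a : ℝ) :
    ∃ C : ℝ, 0 < C ∧ ∀ x : ℝ, 1 ≤ x →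
      |∑ n ∈ Finset.Icc 1 ⌊x⌋₊, dilateDefect φ ⌊x⌋₊ (n / x) * μ n|
        ≤ C * x ^ (-1 - a) * ∫ t in (1 : ℝ)..x, |Mobius_M t| * t ^ a := by
  obtain ⟨C, hC, hderiv_le⟩ := exists_abs_deriv_dilateDefect_le hφ hsupp hint a
  refine ⟨C, hC, fun x hx ↦ ?_⟩
  have hx0 : 0 < x := zero_lt_one.trans_le hx
  have hpos {t : ℝ} (ht : t ∈ Set.Icc 1 x) : 0 < t := zero_lt_one.trans_le ht.1
  have hderiv (t : ℝ) (ht : t ∈ Set.Icc 1 x) :=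
    hasDerivAt_dilateDefect_div (X := ⌊x⌋₊) (hφ.differentiable (by simp))
      (div_pos (hpos ht) hx0).ne'
  have hvanish : dilateDefect φ ⌊x⌋₊ (x / x) = 0 := by
    rw [div_self hx0.ne']
    exact dilateDefect_one ((subset_tsupport φ).trans (hsupp.trans Set.Ioo_subset_Iio_self))
  have hpow_cont : ContinuousOn (fun t : ℝ ↦ C * x ^ (-1 - a) * t ^ a) (Set.Icc 1 x) :=
    continuousOn_const.mul <| continuousOn_id.rpow_const fun t ht ↦ Or.inl (hpos ht).ne'
  have hbound (t : ℝ) (ht : t ∈ Set.Icc 1 x) :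
      |deriv (dilateDefect φ ⌊x⌋₊) (t / x) / x| ≤ C * x ^ (-1 - a) * t ^ a :=
    calc _ = |deriv (dilateDefect φ ⌊x⌋₊) (t / x)| / x := by rw [abs_div, abs_of_pos hx0]
      _ ≤ C * (t / x) ^ a / x := by
        gcongr
        exact hderiv_le _ _ ((div_le_one hx0).2 ht.2) (one_le_floor_add_one_mul_div hx0 ht.1)
      _ = C * x ^ (-1 - a) * t ^ a := by
        rw [Real.div_rpow (hpos ht).le hx0.le, Real.rpow_sub hx0, Real.rpow_neg_one]
        field_simp
  calc _ ≤ ∫ t in Set.Ioc 1 x, |Mobius_M t| * (C * x ^ (-1 - a) * t ^ a) :=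
        abs_sum_mul_moebius_le_integral hderiv
          (continuousOn_deriv_dilateDefect_div (hφ.of_le (by simp)) hx0) hvanish hpow_cont hbound
    _ = C * x ^ (-1 - a) * ∫ t in (1 : ℝ)..x, |Mobius_M t| * t ^ a := by
        simp_rw [mul_left_comm |Mobius_M _|]
        rw [integral_const_mul, intervalIntegral.integral_of_le hx]

theorem integral_one_abs_Mobius_M_mul_of_lt_one (hx : x < 1) (g : ℝ → ℝ) :
    ∫ t in (1 : ℝ)..x, |Mobius_M t| * g t = 0 := by
  rw [intervalIntegral.integral_congr_uIoo (g := fun _ ↦ 0), intervalIntegral.integral_zero]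
  intro t ht
  rw [Set.uIoo_of_ge hx.le] at ht
  simp [Mobius_M_of_lt_one ht.2]

end MoebiusSums

theorem m1_general_bound_general (k : ℝ) :
    ∃ C D : ℝ, 0 < C ∧ 0 < D ∧ ∀ x : ℝ, 0 < x →
      |Mobius_m1 x| ≤
        C * x ^ (1 - k) * (∫ t in (1 : ℝ)..x, |Mobius_M t| * t ^ (k - 3)) + D / x := by
  obtain ⟨φ, hφ, hsupp, hint⟩ := exists_contDiff_tsupport_subset_Ioo_integral_eq_one
  obtain ⟨C, hC, hsum⟩ := exists_abs_sum_dilateDefect_mul_moebius_le hφ hsupp hint (k - 3)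
  obtain ⟨D, hD⟩ := (hasCompactSupport_of_tsupport_subset_Ioo hsupp).exists_bound_of_continuous
    hφ.continuous
  refine ⟨C, max D 1, hC, by positivity, fun x hx ↦ ?_⟩
  obtain hx1 | hx1 := lt_or_ge x 1
  · rw [Mobius_m1_of_lt_one hx1, integral_one_abs_Mobius_M_mul_of_lt_one hx1, abs_zero, mul_zero,
      zero_add]
    positivity
  set I := ∫ t in (1 : ℝ)..x, |Mobius_M t| * t ^ (k - 3)
  have hbound : |x * Mobius_m1 x| ≤ max D 1 + C * x ^ (-1 - (k - 3)) * I := by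
    rw [mul_Mobius_m1_eq ((subset_tsupport φ).trans (hsupp.trans Set.Ioo_subset_Iio_self)) hx]
    exact (abs_add_le _ _).trans (add_le_add ((hD _).trans (le_max_left _ _)) (hsum x hx1))
  rw [abs_mul, abs_of_pos hx, ← le_div_iff₀' hx] at hbound
  refine hbound.trans_eq ?_
  rw [show -1 - (k - 3) = 1 - k + 1 by ring, Real.rpow_add_one hx.ne']
  field_simp
  ring

/-- For every positive integer `k`, there exist positive constants `C_k`, `D_k` such
that for all real `x > 0`,
`|m₁(x)| ≤ C_k x^(1-k) ∫_1^x |M(t)| t^(k-3) dt + D_k / x`. -/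
theorem m1_general_bound (k : ℕ) (hk : 1 ≤ k) :
    ∃ C D : ℝ, 0 < C ∧ 0 < D ∧ ∀ x : ℝ, 0 < x →
      |Mobius_m1 x| ≤
        C * x ^ ((1 : ℤ) - k) * (∫ t in (1 : ℝ)..x, |Mobius_M t| * t ^ ((k : ℤ) - 3))
          + D / x := by
  simpa [← Real.rpow_intCast] using m1_general_bound_general k
end

section
/- For every positive integer k and every integer x ≥ k, the k × k determinant Δ_k(x) = det( C(x+j, 2(i−1)) )_{1 ≤ i, j ≤ k} is nonzero, where C(·,·) denotes the binomial coefficient. In particular Δ_k(2k) ≠ 0. -/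
/-!
A nontrivial relation `v` among the columns gives the nonzero polynomial
`f = ∑ j, v j * (X + 1) ^ (n + j)`, which is divisible by `(X + 1) ^ n`, has degree less than
`n + k`, and whose coefficients at the `k` row indices vanish. So `f` has at most `n` monomials.
But a nonzero root of multiplicity `n` forces more than `n` monomials: `X * f' - m * f` deletes
the monomial of degree `m` while lowering the multiplicity by at most one.
-/

section

open Polynomial

theorem coeff_X_mul_derivative {R : Type*} [Semiring R] (p : R[X]) (i : ℕ) :
    (X * derivative p).coeff i = p.coeff i * i := by
  cases i with
  | zero => simp
  | succ i => rw [coeff_X_mul, coeff_derivative, Nat.cast_succ]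

theorem coeff_taylor_one_X_pow_mul_ofFn {R : Type*} [CommSemiring R] [DecidableEq R] {k : ℕ}
    (n : ℕ) (v : Fin k → R) (i : ℕ) :
    (taylor 1 (X ^ n * ofFn k v)).coeff i = ∑ j : Fin k, ((n + j).choose i : R) * v j := by
  simp only [ofFn_eq_sum_monomial, Finset.mul_sum, X_pow_mul_monomial, map_sum, taylor_monomial,
    finsetSum_coeff, coeff_C_mul, C_1, coeff_X_add_one_pow, add_comm n, mul_comm (v _)]

variable {R : Type*} [CommRing R] [IsDomain R] [CharZero R]

theorem support_X_mul_derivative_sub_C_mul (p : R[X]) (m : ℕ) :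
    (X * derivative p - C (m : R) * p).support = p.support.erase m := by
  ext i
  have hcoeff : (X * derivative p - C (m : R) * p).coeff i = p.coeff i * (i - m) := by
    rw [coeff_sub, coeff_X_mul_derivative, coeff_C_mul]
    ring
  rw [mem_support_iff, hcoeff, mul_ne_zero_iff, sub_ne_zero, Nat.cast_injective.ne_iff,
    Finset.mem_erase, mem_support_iff, and_comm]

theorem lt_card_support_of_X_sub_C_pow_dvd {p : R[X]} {a : R} {n : ℕ} (hp : p ≠ 0)
    (ha : a ≠ 0) (hdvd : (X - C a) ^ n ∣ p) : n < p.support.card := by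
  induction n generalizing p with
  | zero => exact Finset.card_pos.2 (nonempty_support_iff.2 hp)
  | succ n ih =>
    obtain ⟨m, hm⟩ := nonempty_support_iff.2 hp
    set q := X * derivative p - C (m : R) * p with hq
    have hcard : q.support.card + 1 = p.support.card := by
      rw [hq, support_X_mul_derivative_sub_C_mul, Finset.card_erase_add_one hm]
    have hq_ne : q ≠ 0 := by
      intro hq_zero
      obtain ⟨d, c, hc, rfl⟩ : ∃ (d : ℕ) (c : R) (_ : c ≠ 0), p = C c * X ^ d :=
        card_support_eq_one.1 (by rw [← hcard, hq_zero, support_zero, Finset.card_empty])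
      have hroot : (C c * X ^ d).IsRoot a :=
        dvd_iff_isRoot.1 ((dvd_pow_self _ n.succ_ne_zero).trans hdvd)
      rw [IsRoot.def, eval_C_mul, eval_X_pow] at hroot
      exact mul_ne_zero hc (pow_ne_zero d ha) hroot
    have hq_dvd : (X - C a) ^ n ∣ q :=
      dvd_sub ((pow_sub_one_dvd_derivative_of_pow_dvd hdvd).mul_left X)
        (((pow_dvd_pow _ n.le_succ).trans hdvd).mul_left _)
    have := ih hq_ne hq_dvd
    omega

theorem card_lt_of_X_sub_C_pow_dvd_of_coeff_eq_zero {p : R[X]} {a : R} {n k : ℕ} {s : Finset ℕ}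
    (hp : p ≠ 0) (ha : a ≠ 0) (hdvd : (X - C a) ^ n ∣ p) (hdeg : p.degree < (n + k : ℕ))
    (hs : ∀ i ∈ s, i < n + k) (hcoeff : ∀ i ∈ s, p.coeff i = 0) : s.card < k := by
  have hdisj : Disjoint p.support s :=
    Finset.disjoint_left.2 fun i hi his => mem_support_iff.1 hi (hcoeff i his)
  have hsub : p.support ∪ s ⊆ Finset.range (n + k) := by
    refine Finset.union_subset (fun i hi => ?_) fun i hi => Finset.mem_range.2 (hs i hi)
    exact Finset.mem_range.2 (WithBot.coe_lt_coe.1 ((le_degree_of_mem_supp i hi).trans_lt hdeg))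
  have hcard := Finset.card_le_card hsub
  rw [Finset.card_union_of_disjoint hdisj, Finset.card_range] at hcard
  have := lt_card_support_of_X_sub_C_pow_dvd hp ha hdvd
  omega

theorem delta_det_ne_zero_general {k : ℕ} (n : ℕ) {r : Fin k → ℕ} (hr : Function.Injective r)
    (hlt : ∀ i, r i < n + k) :
    Matrix.det (fun i j : Fin k => ((n + j).choose (r i) : R)) ≠ 0 := by
  classical
  intro hdet
  obtain ⟨v, hv, hker⟩ := Matrix.exists_mulVec_eq_zero_iff.2 hdet
  have hofFn : ofFn k v ≠ 0 := (map_ne_zero_iff _ (injective_ofFn k)).2 hv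
  set f := taylor 1 (X ^ n * ofFn k v) with hf
  have hf_ne : f ≠ 0 := (taylor_eq_zero _ _).not.2 (mul_ne_zero (pow_ne_zero n X_ne_zero) hofFn)
  have hf_dvd : (X - C (-1)) ^ n ∣ f := by
    rw [hf, taylor_mul, taylor_X_pow, C_neg, sub_neg_eq_add]
    exact dvd_mul_right _ _
  have hf_deg : f.degree < (n + k : ℕ) := by
    rw [hf, degree_taylor, degree_mul, degree_X_pow, Nat.cast_add]
    exact WithBot.add_lt_add_left (WithBot.natCast_ne_bot n) (ofFn_degree_lt v)
  have hf_coeff : ∀ i, f.coeff (r i) = 0 := fun i =>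
    (coeff_taylor_one_X_pow_mul_ofFn n v (r i)).trans (congrFun hker i)
  have hcard : (Finset.univ.image r).card < k :=
    card_lt_of_X_sub_C_pow_dvd_of_coeff_eq_zero hf_ne (neg_ne_zero.2 one_ne_zero) hf_dvd hf_deg
      (by simpa using hlt) (by simpa using hf_coeff)
  rw [Finset.card_image_of_injective _ hr, Finset.card_fin] at hcard
  exact hcard.false

end

/-- For every positive integer `k` and every integer `x ≥ k`, the `k × k` determinant
`Δ_k(x) = det( C(x+j, 2(i-1)) )_{1 ≤ i,j ≤ k}` is nonzero (as a rational number).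
Here the row index `i` and column index `j` range over `1, …, k`; below, `i j : Fin k`
encode `i-1` and `j-1`. In particular `Δ_k(2k) ≠ 0`. -/
theorem delta_det_ne_zero (k : ℕ) (hk : 1 ≤ k) (x : ℕ) (hx : k ≤ x) :
    Matrix.det (fun i j : Fin k =>
      ((x + ((j : ℕ) + 1)).choose (2 * (i : ℕ)) : ℚ)) ≠ 0 := by
  simpa only [add_right_comm x 1, ← add_assoc] using
    delta_det_ne_zero_general (R := ℚ) (x + 1) (r := fun i : Fin k => 2 * (i : ℕ))
      ((mul_right_injective₀ two_ne_zero).comp Fin.val_injective) (fun i => by omega)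
end
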